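/- arXiv:2003.07265 — 3 statements merged into one kernel-verified Lean document; each statement's English description precedes it below -/
import Mathlib

section
/- Let Ω ⊂ ℝⁿ be a bounded domain. Then there exists a constant C > 0 such that, for every nontrivial finite positive Radon measure μ0 on Ω for which the geodesic distance d_Ω̂ belongs to L¹(μ0), one can find a measurable weight w0 on Ω satisfying: (A) w0 ∈ L¹(Ω) for the Lebesgue measure and w0(x) > 0 for Lebesgue-almost every x ∈ Ω; and (B) for every κ > 0 and every finite signed Radon measure μ on Ω with μ(Ω) = 0 and |μ| ≤ κ μ0, there exists a measurable vector field u : Ω → ℝⁿ with |u(x)| ≤ C κ w0(x) for almost every x ∈ Ω and such that ∫_Ω u·∇φ dx = −∫_Ω φ dμ for every φ ∈ C^∞(ℝⁿ) with compact support. -/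
open MeasureTheory Metric Set
open scoped RealInnerProductSpace ENNReal NNReal

noncomputable section

/-- `ℝⁿ` as a Euclidean space. -/
abbrev En (n : ℕ) := EuclideanSpace ℝ (Fin n)

/-- The geodesic distance, within the set `U`, from the point `x` to the base point `x0`:
the infimum of the lengths (total variations) of rectifiable curves joining `x` to `x0`
inside `U` (non-rectifiable curves have infinite length, so they do not affect the
infimum). -/
def geoDist {X : Type*} [PseudoEMetricSpace X] (U : Set X) (x0 x : X) : ℝ≥0∞ :=
  ⨅ (γ : ℝ → X) (_ : ContinuousOn γ (Set.Icc 0 1)) (_ : Set.MapsTo γ (Set.Icc 0 1) U)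
    (_ : γ 0 = x) (_ : γ 1 = x0), eVariationOn γ (Set.Icc 0 1)

/-- The open measurable cover `Ω̂` associated with a measurable cover `Ω̃`:
`Ω̂ = {x ∈ Ω̃ : dist(x, ℝⁿ \ Ω̃) > 0}`. -/
def hatSet {n : ℕ} (Ot : Set (En n)) : Set (En n) :=
  {x ∈ Ot | 0 < Metric.infDist x Otᶜ}

/-- The integral `∫_s f dμ` of a function against a signed measure, defined through the
Jordan decomposition of `μ`. -/
def signedIntegral {n : ℕ} (μ : MeasureTheory.SignedMeasure (En n)) (s : Set (En n))
    (f : En n → ℝ) : ℝ :=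
  (∫ x in s, f x ∂μ.toJordanDecomposition.posPart) -
    ∫ x in s, f x ∂μ.toJordanDecomposition.negPart

lemma rnDeriv_le_smul {E : Type*} [MeasurableSpace E] {ν m m' : Measure E} [SigmaFinite ν]
    [IsFiniteMeasure m]
    (hm : m ≪ ν) (k : ℝ≥0∞) (hle : m' ≤ k • m) :
    ∀ᵐ y ∂ν, m'.rnDeriv ν y ≤ k * m.rnDeriv ν y := by
  refine ae_le_of_forall_setLIntegral_le_of_sigmaFinite (m'.measurable_rnDeriv ν) fun s hs _ ↦ ?_
  rw [lintegral_const_mul _ (m.measurable_rnDeriv ν), Measure.setLIntegral_rnDeriv hm]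
  exact (Measure.setLIntegral_rnDeriv_le s).trans (hle s)

lemma dens {T E : Type*} [MeasurableSpace T] [MeasurableSpace E] {τ : Measure T}
    {ν : Measure E} [SigmaFinite ν] {ξ : T → E} (hξ : Measurable ξ) {H : T → ℝ≥0∞}
    (hH : Measurable H) (hHfin : ∫⁻ p, H p ∂τ ≠ ⊤) (hac : τ.map ξ ≪ ν)
    (κ : ℝ) (hκ : 0 < κ) (h : T → ℝ) (hh : Measurable h)
    (hle : ∀ᵐ p ∂τ, ENNReal.ofReal |h p| ≤ ENNReal.ofReal κ * H p) :
    ∃ f : E → ℝ, Measurable f ∧ Integrable f ν ∧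
      (∀ᵐ y ∂ν, |f y| ≤ κ * (((τ.withDensity H).map ξ).rnDeriv ν y).toReal) ∧
      ∀ F : E → ℝ, Measurable F → (∃ M, ∀ y, |F y| ≤ M) →
        ∫ y, f y * F y ∂ν = ∫ p, h p * F (ξ p) ∂τ := by
  set m := (τ.withDensity H).map ξ with hm
  have : IsFiniteMeasure (τ.withDensity H) := isFiniteMeasure_withDensity hHfin
  have hmfin : IsFiniteMeasure m := by rw [hm]; infer_instance
  have key : ∀ h : T → ℝ, Measurable h →
      (∀ᵐ p ∂τ, ENNReal.ofReal |h p| ≤ ENNReal.ofReal κ * H p) →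
      ∃ f : E → ℝ, Measurable f ∧ Integrable f ν ∧ (∀ y, 0 ≤ f y) ∧
      (∀ᵐ y ∂ν, f y ≤ κ * (m.rnDeriv ν y).toReal) ∧
      (Integrable (fun p ↦ max (h p) 0) τ) ∧
      ∀ F : E → ℝ, Measurable F → 
        ∫ y, f y * F y ∂ν = ∫ p, max (h p) 0 * F (ξ p) ∂τ := by
    intro h hh hle
    set d : T → ℝ≥0∞ := fun p ↦ ENNReal.ofReal (h p)
    have hd : Measurable d := hh.ennreal_ofReal
    have hdle : ∀ᵐ p ∂τ, d p ≤ ENNReal.ofReal κ * H p :=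
      hle.mono fun p hp ↦ (ENNReal.ofReal_le_ofReal (le_abs_self _)).trans hp
    have hdfin : ∫⁻ p, d p ∂τ ≠ ⊤ := by
      refine ne_top_of_le_ne_top ?_ (lintegral_mono_ae hdle)
      rw [lintegral_const_mul _ hH]
      exact ENNReal.mul_ne_top ENNReal.ofReal_ne_top hHfin
    have : IsFiniteMeasure (τ.withDensity d) := isFiniteMeasure_withDensity hdfin
    set m' := (τ.withDensity d).map ξ with hm'
    have : IsFiniteMeasure m' := by rw [hm']; infer_instance
    have hac0 : ∀ D : T → ℝ≥0∞, (τ.withDensity D).map ξ ≪ ν := fun D ↦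
      ((withDensity_absolutelyContinuous τ D).map hξ).trans hac
    have hle' : m' ≤ ENNReal.ofReal κ • m := by
      rw [hm, hm', ← Measure.map_smul, ← withDensity_smul _ hH]
      exact Measure.map_mono (withDensity_mono hdle) hξ
    refine ⟨fun y ↦ (m'.rnDeriv ν y).toReal, (m'.measurable_rnDeriv ν).ennreal_toReal,
      Measure.integrable_toReal_rnDeriv, fun y ↦ ENNReal.toReal_nonneg, ?_, ?_, ?_⟩
    · filter_upwards [rnDeriv_le_smul (hac0 H) _ hle', m.rnDeriv_lt_top ν] with y hy hy2
      have := ENNReal.toReal_mono (ENNReal.mul_ne_top ENNReal.ofReal_ne_top hy2.ne) hy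
      rwa [ENNReal.toReal_mul, ENNReal.toReal_ofReal hκ.le] at this
    · have := integrable_toReal_of_lintegral_ne_top hd.aemeasurable hdfin
      refine this.congr (ae_of_all _ fun p ↦ ?_)
      simp [d, ENNReal.toReal_ofReal']
    · intro F hF
      rw [integral_toReal_rnDeriv_mul (hac0 d), integral_map hξ.aemeasurable
        hF.aestronglyMeasurable, integral_withDensity_eq_integral_toReal_smul hd
        (ae_of_all _ fun p ↦ ENNReal.ofReal_lt_top)]
      simp [d, ENNReal.toReal_ofReal']
  obtain ⟨f1, hf1, i1, p1, b1, j1, e1⟩ := key h hh hle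
  obtain ⟨f2, hf2, i2, p2, b2, j2, e2⟩ := key (fun p ↦ - h p) hh.neg (by simpa using hle)
  refine ⟨fun y ↦ f1 y - f2 y, hf1.sub hf2, i1.sub i2, ?_, ?_⟩
  · filter_upwards [b1, b2] with y h1 h2
    have := p1 y
    have := p2 y
    rw [abs_le]; constructor <;> linarith
  · rintro F hF ⟨M, hM⟩
    have hb : ∀ᵐ y ∂ν, ‖F y‖ ≤ M := ae_of_all _ hM
    have hb' : ∀ᵐ p ∂τ, ‖F (ξ p)‖ ≤ M := ae_of_all _ fun p ↦ hM _
    simp_rw [sub_mul]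
    rw [integral_sub (i1.mul_bdd hF.aestronglyMeasurable hb)
      (i2.mul_bdd hF.aestronglyMeasurable hb), e1 F hF, e2 F hF]
    have q1 : Integrable (fun p ↦ max (h p) 0 * F (ξ p)) τ :=
      j1.mul_bdd (hF.comp hξ).aestronglyMeasurable hb'
    have q2 : Integrable (fun p ↦ max (-h p) 0 * F (ξ p)) τ :=
      j2.mul_bdd (hF.comp hξ).aestronglyMeasurable hb'
    rw [← integral_sub q1 q2]
    congr 1; ext p
    rw [← sub_mul]
    congr 1
    rcases le_total (h p) 0 with h0 | h0
    · rw [max_eq_right h0, max_eq_left (by linarith)]; ring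
    · rw [max_eq_left h0, max_eq_right (by linarith)]; ring

lemma exists_curve {n : ℕ} {U : Set (En n)} (hpc : IsPathConnected U)
    {x0 z : En n} (hx0 : x0 ∈ U) (hz : z ∈ U) :
    ∃ γ : ℝ → En n, ContinuousOn γ (Set.Icc 0 1) ∧ Set.MapsTo γ (Set.Icc 0 1) U ∧
      γ 0 = z ∧ γ 1 = x0 ∧ eVariationOn γ (Set.Icc 0 1) ≤ geoDist U x0 z + 1 := by
  by_cases htop : geoDist U x0 z = ⊤
  · obtain ⟨γ, hγ⟩ := hpc.joinedIn z hz x0 hx0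
    refine ⟨γ.extend, γ.continuous_extend.continuousOn, ?_, by simp, by simp, by simp [htop]⟩
    intro t ht
    rw [γ.extend_apply ht]
    exact hγ _
  · have hlt : geoDist U x0 z < geoDist U x0 z + 1 := ENNReal.lt_add_right htop one_ne_zero
    conv_lhs at hlt => unfold geoDist
    simp only [iInf_lt_iff] at hlt
    obtain ⟨γ, h1, h2, h3, h4, h5⟩ := hlt
    exact ⟨γ, h1, h2, h3, h4, h5.le⟩

lemma exists_polyline {n : ℕ} {U : Set (En n)} (hU : IsOpen U) {γ : ℝ → En n}
    (hc : ContinuousOn γ (Set.Icc 0 1)) (hm : Set.MapsTo γ (Set.Icc 0 1) U) :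
    ∃ (δ : ℝ) (p : ℕ → En n) (m : ℕ), 0 < δ ∧ p 0 = γ 0 ∧ (∀ i, m ≤ i → p i = γ 1) ∧
      (∀ i, ∀ t ∈ Set.Icc (0:ℝ) 1, ∀ e : En n, ‖e‖ < δ → (1 - t) • p i + t • p (i+1) + e ∈ U) ∧
      ∑' i, edist (p i) (p (i+1)) ≤ eVariationOn γ (Set.Icc 0 1) := by
  obtain ⟨δ, hδ, hsub⟩ := (isCompact_Icc.image_of_continuousOn hc).exists_thickening_subset_open hU
    hm.image_subset
  have huc := isCompact_Icc.uniformContinuousOn_of_continuous hc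
  rw [Metric.uniformContinuousOn_iff] at huc
  obtain ⟨η, hη, hη2⟩ := huc (δ/2) (by positivity)
  obtain ⟨m, hm0⟩ := exists_nat_one_div_lt hη
  set M : ℝ := (m:ℝ) + 1 with hM
  have hMpos : 0 < M := by positivity
  set u : ℕ → ℝ := fun i ↦ min ((i:ℝ) / M) 1 with hu
  have umem : ∀ i, u i ∈ Set.Icc (0:ℝ) 1 := fun i ↦ ⟨le_min (by positivity) zero_le_one,
    min_le_right _ _⟩
  have umono : Monotone u := by
    intro i j hij
    simp only [hu]
    gcongr
  have ustep : ∀ i, dist (u (i+1)) (u i) < η := by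
    intro i
    have h1 : u i ≤ u (i+1) := umono (Nat.le_succ i)
    rw [Real.dist_eq, abs_of_nonneg (by linarith)]
    refine lt_of_le_of_lt ?_ hm0
    simp only [hu]
    push_cast
    rw [add_div]
    have : 0 < 1 / M := by positivity
    rcases le_total ((i:ℝ)/M) 1 with h | h
    · rw [min_eq_left h]; linarith [min_le_left ((i:ℝ)/M + 1/M) 1]
    · rw [min_eq_right h]; linarith [min_le_right ((i:ℝ)/M + 1/M) 1]
  refine ⟨δ/2, fun i ↦ γ (u i), m+1, by positivity, by simp [hu], ?_, ?_, ?_⟩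
  · intro i hi
    have : u i = 1 := by
      simp only [hu]
      apply min_eq_right
      rw [le_div_iff₀ hMpos, one_mul, hM]
      exact_mod_cast hi
    simp [this]
  · intro i t ht e he
    apply hsub
    rw [Metric.mem_thickening_iff]
    refine ⟨γ (u i), mem_image_of_mem _ (umem i), ?_⟩
    have h1 := hη2 _ (umem (i+1)) _ (umem i) (ustep i)
    rw [dist_eq_norm] at h1 ⊢
    have : (1 - t) • γ (u i) + t • γ (u (i+1)) + e - γ (u i) =
      t • (γ (u (i+1)) - γ (u i)) + e := by module
    rw [this]
    calc _ ≤ ‖t • (γ (u (i+1)) - γ (u i))‖ + ‖e‖ := norm_add_le _ _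
      _ ≤ 1 * ‖γ (u (i+1)) - γ (u i)‖ + ‖e‖ := by
        rw [norm_smul, Real.norm_of_nonneg ht.1]; gcongr; exact ht.2
      _ < δ := by linarith
  · refine ENNReal.tsum_le_of_sum_range_le fun N ↦ ?_
    simp_rw [edist_comm (γ (u _)) (γ (u (_ + 1)))]
    exact eVariationOn.sum_le umono umem

lemma local_path {n : ℕ} {U : Set (En n)} (hU : IsOpen U) (hpc : IsPathConnected U)
    {x0 y : En n} (hx0 : x0 ∈ U) (hy : y ∈ U) {r0 : ℝ} (hr0 : 0 < r0)
    (hball : Metric.ball x0 r0 ⊆ U) :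
    ∃ r > 0, ∃ (p : ℕ → En n) (s : ℕ → ℝ), (∀ i, 0 < s i) ∧
      (∃ N, ∀ i, N ≤ i → p i = x0 ∧ s i = r0) ∧
      (∀ i, ∀ t ∈ Set.Icc (0:ℝ) 1, ∀ b ∈ Metric.ball (0 : En n) 1,
        (1 - t) • (p i + s i • b) + t • (p (i+1) + s (i+1) • b) ∈ U) ∧
      ∀ x ∈ Metric.ball y r,
        (∀ t ∈ Set.Icc (0:ℝ) 1, ∀ b ∈ Metric.ball (0 : En n) 1,
          (1 - t) • x + t • (p 0 + s 0 • b) ∈ U) ∧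
        edist x (p 0) + edist 0 (s 0) + ∑' i, (edist (p i) (p (i+1)) + edist (s i) (s (i+1)))
          ≤ geoDist U x0 x + (5 + 2 * ENNReal.ofReal r0) := by
  obtain ⟨R, hR, hRU⟩ := Metric.isOpen_iff.1 hU y hy
  set r := min (R/2) 1 with hr
  have hrpos : 0 < r := by positivity
  have h2r : 2 * r ≤ R := by have := min_le_left (R/2) 1; linarith
  have hr1 : r ≤ 1 := min_le_right _ _
  set d := ⨅ x ∈ Metric.ball y r, geoDist U x0 x with hd
  obtain ⟨z, hz, hzd⟩ : ∃ z ∈ Metric.ball y r, geoDist U x0 z ≤ d + 1 := by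
    by_cases htop : d = ⊤
    · exact ⟨y, Metric.mem_ball_self hrpos, by simp [htop]⟩
    · have hlt : d < d + 1 := ENNReal.lt_add_right htop one_ne_zero
      conv_lhs at hlt => rw [hd]
      simp only [iInf_lt_iff] at hlt
      obtain ⟨z, hz, h⟩ := hlt
      exact ⟨z, hz, h.le⟩
  have hzU : z ∈ U := hRU (Metric.ball_subset_ball (by linarith) hz)
  obtain ⟨γ, hγc, hγm, hγ0, hγ1, hγv⟩ := exists_curve hpc hx0 hzU
  obtain ⟨δ, p, m, hδ, hp0, hpm, hpU, hpv⟩ := exists_polyline hU hγc hγm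
  rw [hγ0] at hp0
  rw [hγ1] at hpm
  set ρ := min δ (min r r0) with hρ
  have hρpos : 0 < ρ := by positivity
  have hρδ : ρ ≤ δ := min_le_left _ _
  have hρr : ρ ≤ r := (min_le_right _ _).trans (min_le_left _ _)
  have hρr0 : ρ ≤ r0 := (min_le_right _ _).trans (min_le_right _ _)
  have hnb : ∀ {a c : ℝ}, 0 < a → a ≤ c → ∀ b ∈ Metric.ball (0 : En n) 1, ‖a • b‖ < c := by
    intro a c ha hac b hb
    rw [mem_ball_zero_iff] at hb
    rw [norm_smul, Real.norm_of_nonneg ha.le]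
    nlinarith
  refine ⟨r, hrpos, p, fun i ↦ if i ≤ m then ρ else r0, ?_, ⟨m+1, ?_⟩, ?_, ?_⟩
  · intro i; dsimp only; split_ifs <;> assumption
  · intro i hi
    exact ⟨hpm i (by omega), if_neg (by omega)⟩
  · intro i t ht b hb
    dsimp only
    by_cases him : i + 1 ≤ m
    · rw [if_pos (by omega), if_pos him]
      have : (1 - t) • (p i + ρ • b) + t • (p (i+1) + ρ • b) =
        (1 - t) • p i + t • p (i+1) + ρ • b := by module
      rw [this]
      exact hpU i t ht _ (hnb hρpos hρδ b hb)
    · rw [if_neg him, hpm i (by omega), hpm (i+1) (by omega)]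
      apply hball
      refine (convex_ball x0 r0) ?_ ?_ (by linarith [ht.2]) ht.1 (by ring)
      · rw [mem_ball_iff_norm, add_sub_cancel_left]
        split_ifs
        · exact hnb hρpos hρr0 b hb
        · exact hnb hr0 le_rfl b hb
      · rw [mem_ball_iff_norm, add_sub_cancel_left]
        exact hnb hr0 le_rfl b hb
  · intro x hx
    simp only [Nat.zero_le, if_true]
    constructor
    · intro t ht b hb
      apply hRU
      refine (convex_ball y R) ?_ ?_ (by linarith [ht.2]) ht.1 (by ring)
      · exact Metric.ball_subset_ball (by linarith) hx
      · rw [mem_ball_iff_norm, hp0]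
        have := hnb hρpos hρr b hb
        rw [mem_ball_iff_norm] at hz
        calc ‖z + ρ • b - y‖ = ‖(z - y) + ρ • b‖ := by congr 1; abel
          _ ≤ ‖z - y‖ + ‖ρ • b‖ := norm_add_le _ _
          _ < R := by linarith
    · rw [ENNReal.tsum_add]
      have e1 : edist x (p 0) ≤ 2 := by
        rw [hp0, edist_dist]
        refine le_trans (ENNReal.ofReal_le_ofReal (q := 2) ?_) (by simp)
        have := dist_triangle_right x z y
        rw [Metric.mem_ball] at hx hz
        linarith
      have e2 : edist 0 ρ ≤ 1 := by
        rw [edist_dist, show (1:ℝ≥0∞) = ENNReal.ofReal 1 by simp]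
        apply ENNReal.ofReal_le_ofReal
        rw [dist_zero_left, Real.norm_of_nonneg hρpos.le]
        linarith
      have e3 : ∑' i, edist (if i ≤ m then ρ else r0) (if i + 1 ≤ m then ρ else r0)
          ≤ 2 * ENNReal.ofReal r0 := by
        rw [tsum_eq_single m]
        · rw [if_pos le_rfl, if_neg (by omega), edist_dist, Real.dist_eq, two_mul]
          refine le_add_right (ENNReal.ofReal_le_ofReal ?_)
          rw [abs_le]; constructor <;> linarith
        · intro i hi
          rcases lt_or_gt_of_ne hi with h | h
          · rw [if_pos h.le, if_pos (by omega), edist_self]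
          · rw [if_neg (by omega), if_neg (by omega), edist_self]
      have e4 : d ≤ geoDist U x0 x := iInf₂_le x hx
      calc _ ≤ 2 + 1 + ((d + 1 + 1) + 2 * ENNReal.ofReal r0) := by
            gcongr
            exact hpv.trans (hγv.trans (by gcongr))
        _ = d + (5 + 2 * ENNReal.ofReal r0) := by ring
        _ ≤ _ := by gcongr

lemma geom {n : ℕ} {U Ω : Set (En n)} (hU : IsOpen U) (hpc : IsPathConnected U)
    (hΩ : IsOpen Ω) (hΩU : Ω ⊆ U)
    {x0 : En n} (hx0 : x0 ∈ Ω) {r0 : ℝ} (hr0 : 0 < r0) (hball : Metric.ball x0 r0 ⊆ U) :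
    ∃ (c : ℕ → En n → En n) (ρ : ℕ → En n → ℝ), (∀ j, Measurable (c j)) ∧
      (∀ j, Measurable (ρ j)) ∧ ∀ x ∈ Ω, c 0 x = x ∧ ρ 0 x = 0 ∧ (∀ j, 0 < ρ (j+1) x) ∧
        (∃ N, ∀ j, N ≤ j → c j x = x0 ∧ ρ j x = r0) ∧
        (∀ j, ∀ t ∈ Set.Icc (0:ℝ) 1, ∀ b ∈ Metric.ball (0 : En n) 1,
          (1 - t) • (c j x + ρ j x • b) + t • (c (j+1) x + ρ (j+1) x • b) ∈ U) ∧
        ∑' j, (edist (c j x) (c (j+1) x) + edist (ρ j x) (ρ (j+1) x)) ≤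
          geoDist U x0 x + (5 + 2 * ENNReal.ofReal r0) := by
  have hloc := fun y (hy : y ∈ U) ↦ local_path hU hpc (hΩU hx0) hy hr0 hball
  choose! r hr p s hs hN hseg hx using hloc
  obtain ⟨S, hSΩ, hScount, hScov⟩ := TopologicalSpace.countable_cover_nhdsWithin
    (s := Ω) (f := fun y ↦ Metric.ball y (r y))
    (fun y hy ↦ mem_nhdsWithin_of_mem_nhds (Metric.ball_mem_nhds y (hr y (hΩU hy))))
  have hSne : S.Nonempty := by
    have := hScov hx0
    simp only [mem_iUnion] at this
    obtain ⟨y, hy, _⟩ := this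
    exact ⟨y, hy⟩
  obtain ⟨Y, hY⟩ := hScount.exists_eq_range hSne
  have hYU : ∀ k, Y k ∈ U := fun k ↦ hΩU (hSΩ (hY ▸ mem_range_self k))
  have hex : ∀ x, ∃ k, x ∈ Metric.ball (Y k) (r (Y k)) ∨ x ∉ Ω := by
    intro x
    by_cases h : x ∈ Ω
    · have := hScov h
      simp only [mem_iUnion] at this
      obtain ⟨y, hy, hxy⟩ := this
      rw [hY] at hy
      obtain ⟨k, rfl⟩ := hy
      exact ⟨k, Or.inl hxy⟩
    · exact ⟨0, Or.inr h⟩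
  classical
  have hkm : Measurable fun x ↦ Nat.find (hex x) := measurable_find hex fun k ↦
    measurableSet_ball.union hΩ.measurableSet.compl
  set κ : En n → ℕ := fun x ↦ Nat.find (hex x) with hκ
  have hκs : ∀ x ∈ Ω, x ∈ Metric.ball (Y (κ x)) (r (Y (κ x))) := fun x hx ↦
    (Nat.find_spec (hex x)).resolve_right (not_not.2 hx)
  refine ⟨fun j x ↦ Nat.casesOn j x (fun i ↦ p (Y (κ x)) i),
    fun j x ↦ Nat.casesOn j 0 (fun i ↦ s (Y (κ x)) i), ?_, ?_, ?_⟩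
  · rintro (_ | j)
    · exact measurable_id
    · exact (measurable_from_nat (f := fun k ↦ p (Y k) j)).comp hkm
  · rintro (_ | j)
    · exact measurable_const
    · exact (measurable_from_nat (f := fun k ↦ s (Y k) j)).comp hkm
  · intro x hxΩ
    have hYk := hYU (κ x)
    obtain ⟨hA, hB⟩ := hx _ hYk x (hκs x hxΩ)
    refine ⟨rfl, rfl, fun j ↦ hs _ hYk j, ?_, ?_, ?_⟩
    · obtain ⟨N, hN⟩ := hN _ hYk
      refine ⟨N+1, ?_⟩
      rintro (_ | j) hj
      · omega
      · exact hN j (by omega)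
    · rintro (_ | j) t ht b hb
      · simpa using hA t ht b hb
      · exact hseg _ hYk j t ht b hb
    · rw [tsum_eq_zero_add' ENNReal.summable]
      exact hB

lemma signed_density {n : ℕ} {Ω : Set (En n)} (hΩ : MeasurableSet Ω) (μ0 : Measure (En n))
    [IsFiniteMeasure μ0] (hsupp : μ0 Ωᶜ = 0) {κ : ℝ} (hκ : 0 < κ)
    (μ : MeasureTheory.SignedMeasure (En n)) (h0 : μ Ω = 0)
    (hle : μ.totalVariation ≤ ENNReal.ofReal κ • μ0) :
    ∃ g : En n → ℝ, Measurable g ∧ (∀ x, |g x| ≤ κ) ∧ ∫ x, g x ∂μ0 = 0 ∧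
      ∀ φ : En n → ℝ, Measurable φ → (∃ M, ∀ x, |φ x| ≤ M) →
        ∫ x, g x * φ x ∂μ0 = signedIntegral μ Ω φ := by
  set P := μ.toJordanDecomposition.posPart
  set N := μ.toJordanDecomposition.negPart
  have hP : P ≤ ENNReal.ofReal κ • μ0 := le_trans (Measure.le_add_right le_rfl) hle
  have hN : N ≤ ENNReal.ofReal κ • μ0 := le_trans (Measure.le_add_left le_rfl) hle
  have hac : ∀ Q : Measure (En n), Q ≤ ENNReal.ofReal κ • μ0 → Q ≪ μ0 := fun Q hQ ↦
    (Measure.absolutelyContinuous_of_le hQ).trans (Measure.smul_absolutelyContinuous)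
  have hres : ∀ Q : Measure (En n), Q ≤ ENNReal.ofReal κ • μ0 → Q.restrict Ω = Q := fun Q hQ ↦ 
    Measure.restrict_eq_self_of_ae_mem (hac Q hQ hsupp)
  have hbd : ∀ Q : Measure (En n), Q ≤ ENNReal.ofReal κ • μ0 →
      ∀ᵐ x ∂μ0, (Q.rnDeriv μ0 x).toReal ≤ κ := by
    intro Q hQ
    filter_upwards [rnDeriv_le_smul (Measure.AbsolutelyContinuous.refl μ0) _ hQ,
      μ0.rnDeriv_self] with x hx hx1
    rw [hx1, mul_one] at hx
    exact ENNReal.toReal_le_of_le_ofReal hκ.le hx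
  set g0 : En n → ℝ := fun x ↦ (P.rnDeriv μ0 x).toReal - (N.rnDeriv μ0 x).toReal with hg0
  have hg0m : Measurable g0 := (P.measurable_rnDeriv μ0).ennreal_toReal.sub
    (N.measurable_rnDeriv μ0).ennreal_toReal
  have hcl : (fun x ↦ max (-κ) (min (g0 x) κ)) =ᵐ[μ0] g0 := by
    filter_upwards [hbd P hP, hbd N hN] with x h1 h2
    have h3 : 0 ≤ (P.rnDeriv μ0 x).toReal := ENNReal.toReal_nonneg
    have h4 : 0 ≤ (N.rnDeriv μ0 x).toReal := ENNReal.toReal_nonneg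
    rw [min_eq_left (by simp only [hg0]; linarith), max_eq_right (by simp only [hg0]; linarith)]
  have key : ∀ φ : En n → ℝ, Measurable φ → (∃ M, ∀ x, |φ x| ≤ M) →
        ∫ x, max (-κ) (min (g0 x) κ) * φ x ∂μ0 = signedIntegral μ Ω φ := by
    rintro φ hφ ⟨M, hM⟩
    have hb : ∀ᵐ y ∂μ0, ‖φ y‖ ≤ M := ae_of_all _ hM
    have : (fun x ↦ max (-κ) (min (g0 x) κ) * φ x) =ᵐ[μ0] fun x ↦ 
        (P.rnDeriv μ0 x).toReal * φ x - (N.rnDeriv μ0 x).toReal * φ x := by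
      filter_upwards [hcl] with x hx
      rw [hx, sub_mul]
    rw [integral_congr_ae this, integral_sub
      (Measure.integrable_toReal_rnDeriv.mul_bdd hφ.aestronglyMeasurable hb)
      (Measure.integrable_toReal_rnDeriv.mul_bdd hφ.aestronglyMeasurable hb),
      integral_toReal_rnDeriv_mul (hac P hP), integral_toReal_rnDeriv_mul (hac N hN),
      signedIntegral, hres P hP, hres N hN]
  refine ⟨_, measurable_const.max (hg0m.min measurable_const), ?_, ?_, key⟩
  · intro x
    rw [abs_le]
    exact ⟨le_max_left _ _, max_le (by linarith) (min_le_right _ _)⟩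
  · have := key (fun _ ↦ 1) measurable_const ⟨1, by simp⟩
    simp only [mul_one] at this
    rw [this, signedIntegral, ← h0]
    conv_rhs => rw [← μ.toSignedMeasure_toJordanDecomposition]
    rw [JordanDecomposition.toSignedMeasure, _root_.sub_apply,
      Measure.toSignedMeasure_apply_measurable hΩ, Measure.toSignedMeasure_apply_measurable hΩ]
    simp

lemma exists_B (n : ℕ) : ∃ B : Measure (En n), IsProbabilityMeasure B ∧ B ≪ volume ∧
    ∀ᵐ b ∂B, b ∈ Metric.ball (0 : En n) 1 := by
  have h0 : volume (Metric.ball (0 : En n) 1) ≠ 0 := (Metric.measure_ball_pos _ _ one_pos).ne'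
  refine ⟨ProbabilityTheory.cond volume (Metric.ball (0 : En n) 1), 
    ProbabilityTheory.cond_isProbabilityMeasure_of_finite h0 measure_ball_lt_top.ne,
    ProbabilityTheory.cond_absolutelyContinuous, ?_⟩
  exact ProbabilityTheory.ae_cond_mem measurableSet_ball

lemma ftc_segment {n : ℕ} {φ : En n → ℝ} (hφ : ContDiff ℝ (⊤ : ℕ∞) φ) (a b : En n) :
    ∫ t in Ioc (0:ℝ) 1, ⟪b - a, gradient φ ((1 - t) • a + t • b)⟫ = φ b - φ a := by
  have hd : Differentiable ℝ φ := hφ.differentiable (by simp)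
  have hcont : Continuous (gradient φ) := by
    unfold gradient
    exact (LinearIsometryEquiv.continuous _).comp (hφ.continuous_fderiv (by simp))
  rw [← intervalIntegral.integral_of_le zero_le_one]
  have hder : ∀ t ∈ Set.uIcc (0:ℝ) 1, HasDerivAt (fun t : ℝ ↦ φ ((1 - t) • a + t • b))
      (⟪b - a, gradient φ ((1 - t) • a + t • b)⟫) t := by
    intro t _
    have h1 : HasDerivAt (fun t : ℝ ↦ (1 - t) • a + t • b) (b - a) t := by
      have h2 := ((((hasDerivAt_id t).const_sub 1).smul_const a).add
        ((hasDerivAt_id t).smul_const b))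
      exact h2.congr_deriv (by module)
    have h3 := (hd ((1 - t) • a + t • b)).hasFDerivAt.comp_hasDerivAt t h1
    refine h3.congr_deriv ?_
    rw [real_inner_comm, inner_gradient_left]
  rw [intervalIntegral.integral_eq_sub_of_hasDerivAt hder]
  · simp
  · apply Continuous.intervalIntegrable
    fun_prop

lemma affine_null {n : ℕ} (a : En n) {σ : ℝ} (hσ : σ ≠ 0) {s : Set (En n)}
    (hs : volume s = 0) : volume {b : En n | a + σ • b ∈ s} = 0 := by
  have h1 : volume ((fun y : En n ↦ a + y) ⁻¹' s) = 0 := by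
    rw [measure_preimage_add]; exact hs
  have : {b : En n | a + σ • b ∈ s} = (fun b ↦ σ • b) ⁻¹' ((fun y : En n ↦ a + y) ⁻¹' s) := rfl
  rw [this, Measure.addHaar_preimage_smul _ hσ, h1, mul_zero]

set_option maxHeartbeats 1000000 in
lemma core {n : ℕ} {Ω U : Set (En n)} (hΩ : IsOpen Ω) (hU : IsOpen U)
    (hnull : volume (U \ Ω) = 0) {x0 : En n} {r0 : ℝ}
    (c : ℕ → En n → En n) (ρ : ℕ → En n → ℝ) (hc : ∀ j, Measurable (c j))
    (hρ : ∀ j, Measurable (ρ j)) (hgood : ∀ x ∈ Ω, c 0 x = x ∧ ρ 0 x = 0 ∧ (∀ j, 0 < ρ (j+1) x) ∧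
        (∃ N, ∀ j, N ≤ j → c j x = x0 ∧ ρ j x = r0) ∧
        (∀ j, ∀ t ∈ Set.Icc (0:ℝ) 1, ∀ b ∈ Metric.ball (0 : En n) 1,
          (1 - t) • (c j x + ρ j x • b) + t • (c (j+1) x + ρ (j+1) x • b) ∈ U))
    (μ0 : Measure (En n)) [IsFiniteMeasure μ0] (hsupp : ∀ᵐ x ∂μ0, x ∈ Ω)
    (hfin : ∫⁻ x, ∑' j, (edist (c j x) (c (j+1) x) + edist (ρ j x) (ρ (j+1) x)) ∂μ0 ≠ ⊤) :
    ∃ W : En n → ℝ, Measurable W ∧ IntegrableOn W Ω volume ∧ (∀ x, 0 ≤ W x) ∧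
      ∀ κ : ℝ, 0 < κ → ∀ g : En n → ℝ, Measurable g → (∀ x, |g x| ≤ κ) →
        ∃ u : En n → En n, Measurable u ∧
          (∀ᵐ x ∂volume.restrict Ω, ‖u x‖ ≤ n * κ * W x) ∧
          ∀ φ : En n → ℝ, ContDiff ℝ (⊤ : ℕ∞) φ → HasCompactSupport φ →
            ∃ K : ℝ, ∫ x in Ω, ⟪u x, gradient φ x⟫ = ∫ x, g x * (K - φ x) ∂μ0 := by
  obtain ⟨B, hBp, hBac, hBball⟩ := exists_B n
  set lam : Measure ℝ := volume.restrict (Ioc 0 1) with hlam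
  have hlamp : IsProbabilityMeasure lam := ⟨by simp [hlam]⟩
  set σ : Measure (ℕ × ℝ) := (Measure.count : Measure ℕ).prod lam with hσ
  set τ : Measure (En n × (En n × (ℕ × ℝ))) := μ0.prod (B.prod σ) with hτ
  -- measurability
  have hcm : ∀ k, Measurable fun p : En n × (En n × (ℕ × ℝ)) ↦ c (p.2.2.1 + k) p.1 := fun k ↦
    (measurable_from_prod_countable_left (f := fun a : En n × ℕ ↦ c (a.2 + k) a.1)
      (fun j ↦ hc (j + k))).comp
      (measurable_fst.prodMk (measurable_fst.comp (measurable_snd.comp measurable_snd)))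
  have hρm : ∀ k, Measurable fun p : En n × (En n × (ℕ × ℝ)) ↦ ρ (p.2.2.1 + k) p.1 := fun k ↦
    (measurable_from_prod_countable_left (f := fun a : En n × ℕ ↦ ρ (a.2 + k) a.1)
      (fun j ↦ hρ (j + k))).comp
      (measurable_fst.prodMk (measurable_fst.comp (measurable_snd.comp measurable_snd)))
  set q : ℕ → En n × (En n × (ℕ × ℝ)) → En n := fun k p ↦
    c (p.2.2.1 + k) p.1 + ρ (p.2.2.1 + k) p.1 • p.2.1 with hq
  have hqm : ∀ k, Measurable (q k) := fun k ↦
    (hcm k).add ((hρm k).smul (measurable_fst.comp measurable_snd))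
  have htm : Measurable fun p : En n × (En n × (ℕ × ℝ)) ↦ p.2.2.2 :=
    measurable_snd.comp (measurable_snd.comp measurable_snd)
  set ξ : En n × (En n × (ℕ × ℝ)) → En n := fun p ↦
    (1 - p.2.2.2) • q 0 p + p.2.2.2 • q 1 p with hξ
  have hξm : Measurable ξ :=
    ((measurable_const.sub htm).smul (hqm 0)).add (htm.smul (hqm 1))
  set v : En n × (En n × (ℕ × ℝ)) → En n := fun p ↦ q 1 p - q 0 p with hv
  have hvm : Measurable v := (hqm 1).sub (hqm 0)
  set H : En n × (En n × (ℕ × ℝ)) → ℝ≥0∞ := fun p ↦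
    edist (c p.2.2.1 p.1) (c (p.2.2.1+1) p.1) + edist (ρ p.2.2.1 p.1) (ρ (p.2.2.1+1) p.1) with hH
  have hHm : Measurable H := ((hcm 0).edist (hcm 1)).add ((hρm 0).edist (hρm 1))
  have hHint : ∫⁻ p, H p ∂τ = ∫⁻ x, ∑' j, (edist (c j x) (c (j+1) x) +
      edist (ρ j x) (ρ (j+1) x)) ∂μ0 := by
    rw [hτ, lintegral_prod _ hHm.aemeasurable]
    refine lintegral_congr fun x ↦ ?_
    have hx : Measurable fun y : En n × (ℕ × ℝ) ↦ H (x, y) := hHm.comp measurable_prodMk_left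
    rw [lintegral_prod _ hx.aemeasurable]
    simp only [hH]
    rw [lintegral_const, measure_univ, mul_one, hσ, lintegral_prod]
    · simp only [lintegral_const, measure_univ, mul_one, lintegral_count]
    · exact ((hHm.comp measurable_prodMk_left).comp
        (measurable_prodMk_left (x := (0 : En n)))).aemeasurable
  have hHfin : ∫⁻ p, H p ∂τ ≠ ⊤ := by rwa [hHint]
  -- absolute continuity
  have hac : τ.map ξ ≪ volume.restrict Ω := by
    refine Measure.AbsolutelyContinuous.mk fun s hs hs0 ↦ ?_
    rw [Measure.map_apply hξm hs, hτ, Measure.measure_prod_null (hξm hs)]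
    rw [Measure.restrict_apply hs] at hs0
    have hsU : volume (s ∩ U) = 0 := by
      refine measure_mono_null (t := (s ∩ Ω) ∪ (U \ Ω)) ?_ (measure_union_null hs0 hnull)
      rintro y ⟨h1, h2⟩
      by_cases h : y ∈ Ω
      · exact Or.inl ⟨h1, h⟩
      · exact Or.inr ⟨h2, h⟩
    filter_upwards [hsupp] with x hx
    obtain ⟨-, h0, hpos, -, hseg⟩ := hgood x hx
    have hms : MeasurableSet (Prod.mk x ⁻¹' (ξ ⁻¹' s)) := measurable_prodMk_left (hξm hs)
    simp only [Pi.zero_apply]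
    rw [Measure.prod_apply_symm hms]
    rw [lintegral_eq_zero_iff' (measurable_measure_prodMk_right hms).aemeasurable]
    have hpos' : ∀ j, 0 ≤ ρ j x := by
      rintro (_ | j)
      · exact h0.ge
      · exact (hpos j).le
    have hae : ∀ᵐ y : ℕ × ℝ ∂σ, y.2 ∈ Ioc (0:ℝ) 1 :=
      Measure.quasiMeasurePreserving_snd.ae (ae_restrict_mem measurableSet_Ioc)
    filter_upwards [hae] with ⟨j, t⟩ ht
    simp only at ht
    set S := (1 - t) * ρ j x + t * ρ (j+1) x with hS
    have hSpos : 0 < S := by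
      have h1 := mul_pos ht.1 (hpos j)
      have h2 := mul_nonneg (sub_nonneg.2 ht.2) (hpos' j)
      linarith
    have hnul := hBac (affine_null ((1 - t) • c j x + t • c (j+1) x) hSpos.ne' hsU)
    refine measure_mono_null ?_ (measure_union_null hnul hBball)
    intro b hb
    by_cases hbb : b ∈ Metric.ball (0 : En n) 1
    · left
      have e : (1 - t) • c j x + t • c (j+1) x + S • b =
        (1 - t) • (c j x + ρ j x • b) + t • (c (j+1) x + ρ (j+1) x • b) := by
        rw [hS]; module
      show _ ∈ s ∩ U
      rw [e]
      exact ⟨hb, hseg j t ⟨ht.1.le, ht.2⟩ b hbb⟩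
    · right; exact hbb
  -- bound on `v`
  have hvH : ∀ᵐ p ∂τ, ‖v p‖ₑ ≤ H p := by
    have hae : ∀ᵐ p ∂τ, p.2.1 ∈ Metric.ball (0 : En n) 1 :=
      ((Measure.quasiMeasurePreserving_fst (μ := B) (ν := σ)).comp
        (Measure.quasiMeasurePreserving_snd (μ := μ0) (ν := B.prod σ))).ae hBball
    filter_upwards [hae] with p hp
    simp only [hv, hq, hH, Nat.add_zero]
    rw [← edist_eq_enorm_sub, edist_comm]
    refine (edist_add_add_le _ _ _ _).trans ?_
    gcongr
    rw [edist_eq_enorm_sub, ← sub_smul, enorm_smul, edist_eq_enorm_sub]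
    have : ‖p.2.1‖ₑ ≤ 1 := by
      rw [mem_ball_zero_iff] at hp
      rw [← ofReal_norm, ENNReal.ofReal_le_one]
      exact hp.le
    calc _ ≤ ‖ρ p.2.2.1 p.1 - ρ (p.2.2.1 + 1) p.1‖ₑ * 1 := by gcongr
      _ = _ := mul_one _
  have hvint : Integrable v τ := by
    refine ⟨hvm.aestronglyMeasurable, ?_⟩
    exact lt_of_le_of_lt (lintegral_mono_ae hvH) hHfin.lt_top
  have hfm : IsFiniteMeasure (τ.withDensity H) := isFiniteMeasure_withDensity hHfin
  refine ⟨fun y ↦ (((τ.withDensity H).map ξ).rnDeriv (volume.restrict Ω) y).toReal,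
    (Measure.measurable_rnDeriv _ _).ennreal_toReal, Measure.integrable_toReal_rnDeriv,
    fun _ ↦ ENNReal.toReal_nonneg, ?_⟩
  intro κ hκ g hg hgκ
  have hd : ∀ i : Fin n, _ := fun i ↦ dens (ν := volume.restrict Ω) hξm hHm hHfin hac κ hκ
    (fun p ↦ g p.1 * v p i) ((hg.comp measurable_fst).mul
      ((EuclideanSpace.proj (𝕜 := ℝ) i).continuous.measurable.comp hvm)) (by
      filter_upwards [hvH] with p hp
      rw [abs_mul, ENNReal.ofReal_mul (abs_nonneg _)]
      refine mul_le_mul' (ENNReal.ofReal_le_ofReal (hgκ _)) (le_trans ?_ hp)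
      rw [← ofReal_norm]
      exact ENNReal.ofReal_le_ofReal (PiLp.norm_apply_le (v p) i))
  choose f hfm hfi hfb hfF using hd
  refine ⟨fun y ↦ WithLp.toLp 2 (fun i ↦ f i y), ?_, ?_, ?_⟩
  · exact (PiLp.continuous_toLp 2 _).measurable.comp (measurable_pi_lambda _ hfm)
  · filter_upwards [ae_all_iff.2 hfb] with y hy
    calc _ ≤ ∑ i, |f i y| := by
          have := EuclideanSpace.norm_eq (WithLp.toLp 2 (fun i ↦ f i y) : En n)
          rw [this]
          refine Real.sqrt_le_iff.2 ⟨Finset.sum_nonneg fun i _ ↦ abs_nonneg _, ?_⟩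
          simp only [Real.norm_eq_abs]
          exact Finset.sum_sq_le_sq_sum_of_nonneg fun i _ ↦ abs_nonneg _
      _ ≤ ∑ i : Fin n, κ * _ := Finset.sum_le_sum fun i _ ↦ hy i
      _ = _ := by simp [mul_assoc]
  · intro φ hφ hφc
    have hcont : Continuous (gradient φ) := by
      unfold gradient
      exact (LinearIsometryEquiv.continuous _).comp (hφ.continuous_fderiv (by simp))
    have hcs : HasCompactSupport (gradient φ) := by
      unfold gradient
      exact (hφc.fderiv ℝ).comp_left (map_zero _)
    obtain ⟨M, hM⟩ := hcont.bounded_above_of_compact_support hcs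
    have hFm : ∀ i : Fin n, Measurable fun y ↦ gradient φ y i := fun i ↦
      (EuclideanSpace.proj (𝕜 := ℝ) i).continuous.measurable.comp hcont.measurable
    have hFb : ∀ i : Fin n, ∀ y, |gradient φ y i| ≤ M := fun i y ↦
      (PiLp.norm_apply_le (gradient φ y) i).trans (hM y)
    -- the scalar integrand
    set G : En n × (En n × (ℕ × ℝ)) → ℝ := fun p ↦ ⟪v p, gradient φ (ξ p)⟫ with hG
    have hGm : Measurable G := hvm.inner (hcont.measurable.comp hξm)
    have hGint : Integrable G τ := by
      refine (hvint.norm.mul_const M).mono' hGm.aestronglyMeasurable (ae_of_all _ fun p ↦ ?_)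
      exact (norm_inner_le_norm _ _).trans (by gcongr; exact hM _)
    have hgG : Integrable (fun p ↦ g p.1 * G p) τ :=
      hGint.bdd_mul (hg.comp measurable_fst).aestronglyMeasurable (ae_of_all _ fun p ↦ hgκ p.1)
    have hvi : ∀ i : Fin n, Integrable (fun p ↦ g p.1 * v p i * gradient φ (ξ p) i) τ := by
      intro i
      have h1 : Integrable (fun p ↦ v p i) τ :=
        (EuclideanSpace.proj (𝕜 := ℝ) i).integrable_comp hvint
      have h2 : Integrable (fun p ↦ g p.1 * v p i) τ :=
        h1.bdd_mul (hg.comp measurable_fst).aestronglyMeasurable (ae_of_all _ fun p ↦ hgκ p.1)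
      exact h2.mul_bdd ((hFm i).comp hξm).aestronglyMeasurable (ae_of_all _ fun p ↦ hFb i (ξ p))
    have step1 : ∫ y in Ω, ⟪(WithLp.toLp 2 (fun i ↦ f i y) : En n), gradient φ y⟫ =
        ∫ p, g p.1 * G p ∂τ := by
      have e1 : ∀ y, ⟪(WithLp.toLp 2 (fun i ↦ f i y) : En n), gradient φ y⟫ =
          ∑ i, f i y * gradient φ y i := by
        intro y
        rw [PiLp.inner_apply]
        refine Finset.sum_congr rfl fun i _ ↦ ?_
        simp [mul_comm]
      have e2 : ∀ p, g p.1 * G p = ∑ i, g p.1 * v p i * gradient φ (ξ p) i := by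
        intro p
        simp only [hG, PiLp.inner_apply, Finset.mul_sum]
        refine Finset.sum_congr rfl fun i _ ↦ ?_
        simp [mul_comm, mul_left_comm]
      simp_rw [e1, e2]
      rw [integral_finsetSum _ fun i _ ↦ (hfi i).mul_bdd (hFm i).aestronglyMeasurable
        (ae_of_all _ fun y ↦ hFb i y), integral_finsetSum _ fun i _ ↦ hvi i]
      exact Finset.sum_congr rfl fun i _ ↦ hfF i _ (hFm i) ⟨M, hFb i⟩
    refine ⟨∫ b, φ (x0 + r0 • b) ∂B, ?_⟩
    rw [step1, hτ, integral_prod _ hgG]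
    refine integral_congr_ae ?_
    filter_upwards [hsupp, hGint.prod_right_ae] with x hx hxint
    rw [integral_const_mul]
    congr 1
    obtain ⟨hc0, hρ0, -, ⟨N, hN⟩, -⟩ := hgood x hx
    rw [integral_prod _ hxint]
    have hφbint : Integrable (fun b ↦ φ (x0 + r0 • b)) B := by
      obtain ⟨M', hM'⟩ := hφ.continuous.bounded_above_of_compact_support hφc
      refine Integrable.of_bound (C := M') ?_ (ae_of_all _ fun b ↦ hM' _)
      have : Continuous fun b : En n ↦ φ (x0 + r0 • b) := hφ.continuous.comp (by fun_prop)
      exact this.aestronglyMeasurable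
    have : ∫ b, φ (x0 + r0 • b) ∂B - φ x = ∫ b, (φ (x0 + r0 • b) - φ x) ∂B := by
      rw [integral_sub hφbint (integrable_const _)]
      simp
    rw [this]
    refine integral_congr_ae ?_
    filter_upwards [hxint.prod_right_ae] with b hb
    rw [hσ, integral_prod _ hb, integral_countable hb.integral_prod_left]
    have e : ∀ j : ℕ, ∫ t, G (x, (b, (j, t))) ∂lam =
        φ (c (j+1) x + ρ (j+1) x • b) - φ (c j x + ρ j x • b) := by
      intro j
      have h := ftc_segment hφ (c j x + ρ j x • b) (c (j+1) x + ρ (j+1) x • b)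
      exact h
    simp_rw [e]
    rw [tsum_eq_sum (s := Finset.range N)]
    · have : ∀ j : ℕ, (Measure.count : Measure ℕ).real {j} = 1 := by
        intro j; simp [Measure.real]
      simp_rw [this, one_smul]
      rw [Finset.sum_range_sub (fun j ↦ φ (c j x + ρ j x • b)), (hN N le_rfl).1, (hN N le_rfl).2,
        hc0, hρ0]
      simp
    · intro j hj
      rw [Finset.mem_range, not_lt] at hj
      rw [(hN j hj).1, (hN j hj).2, (hN (j+1) (by omega)).1, (hN (j+1) (by omega)).2]
      simp

lemma hatSet_eq {n : ℕ} {Ot : Set (En n)} (hne : Otᶜ.Nonempty) : hatSet Ot = interior Ot := by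
  ext x
  simp only [hatSet, mem_ofPred_eq]
  rw [← Metric.infDist_closure, ← isClosed_closure.notMem_iff_infDist_pos hne.closure,
    closure_compl, mem_compl_iff, not_not]
  exact ⟨fun h ↦ h.2, fun h ↦ ⟨interior_subset h, h⟩⟩

/-- For a bounded domain `Ω ⊆ ℝⁿ` (with a fixed measurable cover `Ω̃`
and associated `Ω̂`, and base point `x0 ∈ Ω`), there is a constant `C > 0` such that for
every nontrivial finite positive Radon measure `μ0` on `Ω` with `d_Ω̂ ∈ L¹(μ0)` one can
find a weight `w0 ∈ L¹(Ω)`, positive a.e. on `Ω`, such that for every `κ > 0` and every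
finite signed Radon measure `μ` on `Ω` with `μ(Ω) = 0` and `|μ| ≤ κ μ0` there is a
measurable vector field `u` with `|u| ≤ C κ w0` a.e. on `Ω` solving
`∫_Ω u·∇φ = −∫_Ω φ dμ` for all compactly supported smooth `φ`. -/
theorem stmt_0 (n : ℕ) (hn : 1 ≤ n) (Ω Ot : Set (En n))
    (hΩopen : IsOpen Ω) (hΩconn : IsConnected Ω) (hΩbdd : Bornology.IsBounded Ω)
    (hcov : Ω ⊆ Ot) (hcovnull : volume (Ot \ Ω) = 0)
    (x0 : En n) (hx0 : x0 ∈ Ω) :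
    ∃ C : ℝ, 0 < C ∧
      ∀ μ0 : Measure (En n), IsFiniteMeasure μ0 → μ0 ≠ 0 → μ0 Ωᶜ = 0 →
        (∫⁻ x in Ω, geoDist (hatSet Ot) x0 x ∂μ0) < ⊤ →
        ∃ w0 : En n → ℝ, Measurable w0 ∧
          IntegrableOn w0 Ω volume ∧
          (∀ᵐ x ∂volume.restrict Ω, 0 < w0 x) ∧
          ∀ κ : ℝ, 0 < κ →
            ∀ μ : MeasureTheory.SignedMeasure (En n),
              μ Ω = 0 → μ.totalVariation ≤ ENNReal.ofReal κ • μ0 →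
              ∃ u : En n → En n, Measurable u ∧
                (∀ᵐ x ∂volume.restrict Ω, ‖u x‖ ≤ C * κ * w0 x) ∧
                ∀ φ : En n → ℝ, ContDiff ℝ (⊤ : ℕ∞) φ → HasCompactSupport φ →
                  ∫ x in Ω, ⟪u x, gradient φ x⟫ = - signedIntegral μ Ω φ := by
  have hOtne : Otᶜ.Nonempty := by
    by_contra hne
    rw [not_nonempty_iff_eq_empty, compl_empty_iff] at hne
    have : Nontrivial (En n) := by
      have : Nonempty (Fin n) := ⟨⟨0, hn⟩⟩
      infer_instance
    have h1 : volume (univ : Set (En n)) ≤ volume Ω + volume (Ot \ Ω) := by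
      rw [hne]
      refine (measure_mono (fun x _ ↦ ?_)).trans (measure_union_le Ω (univ \ Ω))
      by_cases h : x ∈ Ω
      · exact Or.inl h
      · exact Or.inr ⟨trivial, h⟩
    rw [hcovnull, add_zero] at h1
    exact absurd (h1.trans_lt hΩbdd.measure_lt_top) (by
      rw [measure_univ_of_isAddLeftInvariant]; simp)
  have hUeq := hatSet_eq hOtne
  set U := hatSet Ot with hUdef
  have hU : IsOpen U := by rw [hUeq]; exact isOpen_interior
  have hΩU : Ω ⊆ U := by rw [hUeq]; exact interior_maximal hcov hΩopen
  have hUOt : U ⊆ Ot := by rw [hUeq]; exact interior_subset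
  have hnull : volume (U \ Ω) = 0 := measure_mono_null (sdiff_subset_sdiff_left hUOt) hcovnull
  have hUcl : U ⊆ closure Ω := by
    intro x hx
    by_contra hxc
    have hop : IsOpen (U ∩ (closure Ω)ᶜ) := hU.inter isClosed_closure.isOpen_compl
    have h0 : volume (U ∩ (closure Ω)ᶜ) = 0 :=
      measure_mono_null (t := U \ Ω)
        (fun y hy ↦ ⟨hy.1, fun h ↦ hy.2 (subset_closure h)⟩) hnull
    exact (hop.measure_pos volume ⟨x, hx, hxc⟩).ne' h0
  have hUconn : IsConnected U := hΩconn.subset_closure hΩU hUcl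
  have hpc : IsPathConnected U := hU.isConnected_iff_isPathConnected.1 hUconn
  obtain ⟨r0, hr0, hball⟩ := Metric.isOpen_iff.1 hU x0 (hΩU hx0)
  obtain ⟨c, ρ, hc, hρ, hgood⟩ := geom hU hpc hΩopen hΩU hx0 hr0 hball
  refine ⟨n, by exact_mod_cast hn, ?_⟩
  intro μ0 hμ0 _ hsupp hfin
  have hsupp' : ∀ᵐ x ∂μ0, x ∈ Ω := hsupp
  have hres : μ0.restrict Ω = μ0 := Measure.restrict_eq_self_of_ae_mem hsupp'
  rw [hres] at hfin
  obtain ⟨W, hWm, hWi, hW0, hW⟩ := core hΩopen hU hnull c ρ hc hρ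
    (fun x hx ↦ ⟨(hgood x hx).1, (hgood x hx).2.1, (hgood x hx).2.2.1, (hgood x hx).2.2.2.1,
      (hgood x hx).2.2.2.2.1⟩) μ0 hsupp' (by
      refine ne_top_of_le_ne_top ?_ (lintegral_mono_ae
        (hsupp'.mono fun x hx ↦ (hgood x hx).2.2.2.2.2))
      rw [lintegral_add_right _ measurable_const, lintegral_const]
      refine ENNReal.add_ne_top.2 ⟨hfin.ne, ENNReal.mul_ne_top ?_ (measure_ne_top _ _)⟩
      exact ENNReal.add_ne_top.2 ⟨by simp, ENNReal.mul_ne_top (by simp) ENNReal.ofReal_ne_top⟩)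
  refine ⟨fun x ↦ W x + 1, hWm.add_const 1, ?_, ?_, ?_⟩
  · exact hWi.add (integrableOn_const (hs := hΩbdd.measure_lt_top.ne))
  · exact ae_of_all _ fun x ↦ by linarith [hW0 x]
  intro κ hκ μ hμ0' hle
  obtain ⟨g, hgm, hgb, hg0, hgφ⟩ := signed_density hΩopen.measurableSet μ0 hsupp hκ μ hμ0' hle
  obtain ⟨u, hum, hub, huφ⟩ := hW κ hκ g hgm hgb
  refine ⟨u, hum, ?_, ?_⟩
  · filter_upwards [hub] with x hx
    have : (0:ℝ) ≤ n * κ := by positivity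
    nlinarith
  · intro φ hφ hφc
    obtain ⟨K, hK⟩ := huφ φ hφ hφc
    obtain ⟨M', hM'⟩ := hφ.continuous.bounded_above_of_compact_support hφc
    have hgi : Integrable g μ0 := Integrable.of_bound hgm.aestronglyMeasurable κ
      (ae_of_all _ hgb)
    have hgφi : Integrable (fun x ↦ g x * φ x) μ0 :=
      hgi.mul_bdd hφ.continuous.aestronglyMeasurable (ae_of_all _ hM')
    rw [hK]
    simp_rw [mul_sub]
    rw [integral_sub (hgi.mul_const K) hgφi, integral_mul_const, hg0,
      hgφ φ hφ.continuous.measurable ⟨M', hM'⟩]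
    simp
end
end

section
/- Let Ω ⊂ ℝⁿ be a bounded domain and μ0 a nontrivial finite positive Radon measure on Ω. Suppose there exists a weight w ∈ L¹(Ω) with w > 0 almost everywhere such that the inequality (P1*) holds: there exists C > 0 such that for every locally Lipschitz function f on Ω̂ whose local Lipschitz constant is bounded on Ω̂ and whose zero set E := {f = 0} satisfies μ0(E) > 0, one has ∫_Ω |f| dμ0 ≤ C (1 + μ0(Ω)/μ0(E)) ∫_Ω |∇f| w (with finiteness of the right-hand side entailing f ∈ L¹(μ0)). Then the geodesic distance d_Ω̂ belongs to L¹(μ0). -/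
open MeasureTheory Metric Set
open scoped RealInnerProductSpace ENNReal NNReal

noncomputable section

/-- `f` is locally Lipschitz on `U` with a (uniformly) bounded local Lipschitz constant. -/
def LocLipBdd {n : ℕ} (U : Set (En n)) (f : En n → ℝ) : Prop :=
  ∃ K : ℝ≥0, ∀ x ∈ U, ∃ ε : ℝ, 0 < ε ∧ LipschitzOnWith K f (Metric.ball x ε ∩ U)

theorem aux_geo_step {n : ℕ} (U : Set (En n)) (x0 x y : En n) (h : segment ℝ y x ⊆ U) :
    geoDist U x0 y ≤ edist y x + geoDist U x0 x := by
  conv_rhs => unfold geoDist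
  simp only [ENNReal.add_iInf]
  refine le_iInf fun γ => le_iInf fun hc => le_iInf fun hm => le_iInf fun h0 => le_iInf fun h1 => ?_
  let δ : ℝ → En n := fun t => if t ≤ 1/2 then AffineMap.lineMap y x (2*t) else γ (2*t-1)
  have hδ1 : EqOn δ ((AffineMap.lineMap y x : ℝ → En n) ∘ (fun t => 2*t)) (Icc 0 (1/2)) := by
    intro t ht
    simp only [δ, if_pos ht.2, Function.comp]
  have hδ2 : EqOn δ (γ ∘ (fun t => 2*t-1)) (Icc (1/2) 1) := by
    intro t ht
    rcases eq_or_lt_of_le ht.1 with h | h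
    · subst h
      simp [δ, h0]
    · simp only [δ, if_neg (not_le.2 h), Function.comp]
  have hunion : Icc (0:ℝ) 1 = Icc 0 (1/2) ∪ Icc (1/2) 1 :=
    (Icc_union_Icc_eq_Icc (by norm_num) (by norm_num)).symm
  have hm2 : MapsTo (fun t : ℝ => 2*t-1) (Icc (1/2) 1) (Icc 0 1) := by
    intro t ht
    constructor <;> linarith [ht.1, ht.2]
  have hm1 : MapsTo (fun t : ℝ => 2*t) (Icc 0 (1/2)) (Icc 0 1) := by
    intro t ht
    constructor <;> linarith [ht.1, ht.2]
  have c1 : ContinuousOn δ (Icc 0 (1/2)) := by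
    refine ContinuousOn.congr ?_ hδ1
    exact (AffineMap.lineMap_continuous.comp (by fun_prop)).continuousOn
  have c2 : ContinuousOn δ (Icc (1/2) 1) := by
    refine ContinuousOn.congr ?_ hδ2
    exact hc.comp (by fun_prop) hm2
  have c : ContinuousOn δ (Icc 0 1) := by
    rw [hunion]
    exact c1.union_of_isClosed c2 isClosed_Icc isClosed_Icc
  have m : MapsTo δ (Icc 0 1) U := by
    rw [hunion]
    rintro t (ht | ht)
    · rw [hδ1 ht]
      apply h
      rw [segment_eq_image_lineMap]
      exact ⟨_, hm1 ht, rfl⟩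
    · rw [hδ2 ht]
      exact hm (hm2 ht)
  have d0 : δ 0 = y := by simp [δ]
  have d1 : δ 1 = x0 := by
    have : ¬ ((1:ℝ) ≤ 1/2) := by norm_num
    simp only [δ, if_neg this]
    norm_num [h1]
  have v : eVariationOn δ (Icc 0 1) ≤ edist y x + eVariationOn γ (Icc 0 1) := by
    have := eVariationOn.Icc_add_Icc δ (s := univ) (a := 0) (b := 1/2) (c := 1)
      (by norm_num) (by norm_num) (mem_univ _)
    simp only [univ_inter] at this
    rw [← this, eVariationOn.eq_of_eqOn hδ1, eVariationOn.eq_of_eqOn hδ2]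
    gcongr
    · refine (eVariationOn.comp_le_of_monotoneOn _ (s := Icc 0 1) _ ?_ hm1).trans ?_
      · intro a _ b _ hab
        simpa using hab
      · have hl : LipschitzOnWith (nndist y x) (AffineMap.lineMap y x : ℝ → En n) univ :=
          (lipschitzWith_lineMap y x).lipschitzOnWith
        have h2 := hl.comp_eVariationOn_le (g := (id : ℝ → ℝ)) (s := Icc 0 1) (mapsTo_univ _ _)
        have h3 := (monotone_id.monotoneOn univ).eVariationOn_le (mem_univ (0:ℝ)) (mem_univ 1)
        simp only [univ_inter, id, sub_zero, ENNReal.ofReal_one] at h3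
        calc _ ≤ _ := h2
          _ ≤ (nndist y x : ℝ≥0∞) * 1 := by gcongr
          _ = _ := by rw [mul_one, edist_nndist]
    · refine eVariationOn.comp_le_of_monotoneOn _ _ ?_ hm2
      intro a _ b _ hab
      dsimp only
      linarith
  refine le_trans ?_ v
  exact iInf_le_of_le δ (iInf_le_of_le c (iInf_le_of_le m (iInf_le_of_le d0 (iInf_le_of_le d1 le_rfl))))

theorem aux_geo_self {n : ℕ} (U : Set (En n)) (x0 : En n) (h : x0 ∈ U) :
    geoDist U x0 x0 = 0 := by
  refine le_antisymm ?_ bot_le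
  refine iInf_le_of_le (fun _ => x0) (iInf_le_of_le continuousOn_const
    (iInf_le_of_le (fun _ _ => h) (iInf_le_of_le rfl (iInf_le_of_le rfl ?_))))
  exact (eVariationOn.constant_on (by rintro _ ⟨a, _, rfl⟩ _ ⟨b, _, rfl⟩; rfl)).le

theorem aux_seg {n : ℕ} {U : Set (En n)} {x y z : En n} {ε : ℝ} (h : ball x ε ⊆ U)
    (hy : y ∈ ball x ε) (hz : z ∈ ball x ε) : segment ℝ y z ⊆ U :=
  ((convex_ball x ε).segment_subset hy hz).trans h

theorem aux_geo_fin {n : ℕ} (U : Set (En n)) (ho : IsOpen U) (hc : IsPreconnected U) (x0 : En n)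
    (h0 : x0 ∈ U) (x : En n) (hx : x ∈ U) : geoDist U x0 x ≠ ⊤ := by
  have key : geoDist U x0 x0 ≠ ⊤ ↔ geoDist U x0 x ≠ ⊤ := by
    refine hc.induction₂ (fun a b => geoDist U x0 a ≠ ⊤ ↔ geoDist U x0 b ≠ ⊤) ?_ ?_ ?_ h0 hx
    · intro a ha
      obtain ⟨ε, hε, hb⟩ := Metric.isOpen_iff.1 ho a ha
      filter_upwards [mem_nhdsWithin_of_mem_nhds (ball_mem_nhds a hε)] with b hbb
      have haa := mem_ball_self (x := a) hε
      constructor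
      · intro h
        exact ne_top_of_le_ne_top (ENNReal.add_ne_top.2 ⟨edist_ne_top _ _, h⟩)
          (aux_geo_step U x0 a b (aux_seg hb hbb haa))
      · intro h
        exact ne_top_of_le_ne_top (ENNReal.add_ne_top.2 ⟨edist_ne_top _ _, h⟩)
          (aux_geo_step U x0 b a (aux_seg hb haa hbb))
    · intro a b c _ _ _ h1 h2
      exact h1.trans h2
    · intro a b _ _ h
      exact h.symm
  apply key.1
  rw [aux_geo_self U x0 h0]
  simp

theorem aux_lip {n : ℕ} (U : Set (En n)) (ho : IsOpen U) (hc : IsPreconnected U) (x0 : En n)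
    (h0 : x0 ∈ U) (R : ℝ) (x : En n) (hx : x ∈ U) : ∃ ε : ℝ, 0 < ε ∧
    ball x ε ⊆ U ∧ LipschitzOnWith 1 (fun y => max ((geoDist U x0 y).toReal - R) 0) (ball x ε) := by
  obtain ⟨ε, hε, hb⟩ := Metric.isOpen_iff.1 ho x hx
  refine ⟨ε, hε, hb, ?_⟩
  have key : ∀ y ∈ ball x ε, ∀ z ∈ ball x ε,
      (geoDist U x0 y).toReal ≤ dist y z + (geoDist U x0 z).toReal := by
    intro y hy z hz
    have h1 := aux_geo_step U x0 z y (aux_seg hb hy hz)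
    have hzf := aux_geo_fin U ho hc x0 h0 z (hb hz)
    have := ENNReal.toReal_mono (ENNReal.add_ne_top.2 ⟨edist_ne_top _ _, hzf⟩) h1
    rwa [ENNReal.toReal_add (edist_ne_top _ _) hzf, ← dist_edist] at this
  refine LipschitzOnWith.of_dist_le_mul fun y hy z hz => ?_
  rw [Real.dist_eq, NNReal.coe_one, one_mul]
  have h1 := key y hy z hz
  have h2 := key z hz y hy
  rw [dist_comm z y] at h2
  refine (abs_max_sub_max_le_abs _ _ _).trans ?_
  rw [abs_le]
  constructor <;> linarith

theorem aux_hat {n : ℕ} (hn : 1 ≤ n) (Ω Ot : Set (En n))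
    (hΩopen : IsOpen Ω) (hΩconn : IsConnected Ω) (hΩbdd : Bornology.IsBounded Ω)
    (hcov : Ω ⊆ Ot) (hcovnull : volume (Ot \ Ω) = 0) :
    IsOpen (hatSet Ot) ∧ IsPreconnected (hatSet Ot) ∧ Ω ⊆ hatSet Ot := by
  have hne : (Otᶜ).Nonempty := by
    by_contra hcon
    rw [not_nonempty_iff_eq_empty, compl_empty_iff] at hcon
    rw [hcon] at hcovnull
    haveI : Nonempty (Fin n) := ⟨⟨0, hn⟩⟩
    have h1 : volume (univ : Set (En n)) ≤ volume (univ \ Ω) + volume Ω := by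
      refine (measure_mono ?_).trans (measure_union_le _ _)
      intro x _
      by_cases h : x ∈ Ω <;> simp [h]
    rw [hcovnull, zero_add] at h1
    have h2 : volume Ω < ⊤ := hΩbdd.measure_lt_top
    have h3 : volume (univ : Set (En n)) = ⊤ := by
      haveI : Nontrivial (En n) := inferInstance
      haveI : NoncompactSpace (En n) := NormedSpace.noncompactSpace ℝ (En n)
      exact measure_univ_of_isAddLeftInvariant _
    rw [h3] at h1
    exact absurd h2 (not_lt.2 h1)
  have heq : hatSet Ot = {x | 0 < infDist x Otᶜ} := by
    ext x
    refine ⟨fun h => h.2, fun h => ⟨?_, h⟩⟩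
    by_contra hx
    exact absurd (infDist_zero_of_mem (s := Otᶜ) hx) (ne_of_gt h)
  have hop : IsOpen (hatSet Ot) := by
    rw [heq]
    exact isOpen_lt continuous_const (continuous_infDist_pt _)
  have hsub : Ω ⊆ hatSet Ot := by
    intro x hx
    obtain ⟨ε, hε, hb⟩ := Metric.isOpen_iff.1 hΩopen x hx
    refine ⟨hcov hx, lt_of_lt_of_le hε ?_⟩
    rw [le_infDist hne]
    intro y hy
    by_contra hlt
    apply hy
    apply hcov
    apply hb
    rw [mem_ball, dist_comm]
    exact not_le.1 hlt
  refine ⟨hop, hΩconn.isPreconnected.subset_closure hsub ?_, hsub⟩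
  intro x hx
  rw [_root_.mem_closure_iff]
  intro o ho hxo
  by_contra hem
  rw [not_nonempty_iff_eq_empty] at hem
  have hpos : 0 < volume (o ∩ hatSet Ot) := (ho.inter hop).measure_pos volume ⟨x, hxo, hx⟩
  refine absurd hpos (not_lt.2 ?_)
  rw [← hcovnull]
  refine measure_mono fun y hy => ⟨hy.2.1, fun hyΩ => ?_⟩
  have : y ∈ o ∩ Ω := ⟨hy.1, hyΩ⟩
  rw [hem] at this
  exact this

/-- If there is a weight `w ∈ L¹(Ω)`, `w > 0` a.e., for which the
inequality `(P1*)` holds on locally Lipschitz functions with bounded local Lipschitz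
constant on `Ω̂` whose zero set has positive `μ0`-measure, then `d_Ω̂ ∈ L¹(μ0)`.
(The inequality is stated with lower integrals, so that finiteness of the right-hand
side automatically entails `f ∈ L¹(μ0)`.) -/
theorem stmt_3 (n : ℕ) (hn : 1 ≤ n) (Ω Ot : Set (En n))
    (hΩopen : IsOpen Ω) (hΩconn : IsConnected Ω) (hΩbdd : Bornology.IsBounded Ω)
    (hcov : Ω ⊆ Ot) (hcovnull : volume (Ot \ Ω) = 0)
    (x0 : En n) (hx0 : x0 ∈ Ω)
    (μ0 : Measure (En n)) [IsFiniteMeasure μ0] (hμ0ne : μ0 ≠ 0) (hμ0supp : μ0 Ωᶜ = 0)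
    (w : En n → ℝ) (hwint : IntegrableOn w Ω volume)
    (hwpos : ∀ᵐ x ∂volume.restrict Ω, 0 < w x)
    (hP : ∃ C : ℝ, 0 < C ∧
      ∀ f : En n → ℝ, LocLipBdd (hatSet Ot) f →
        0 < μ0 {x ∈ Ω | f x = 0} →
        ∫⁻ x in Ω, ENNReal.ofReal |f x| ∂μ0 ≤
          ENNReal.ofReal C * (1 + μ0 Ω / μ0 {x ∈ Ω | f x = 0}) *
            ∫⁻ x in Ω, ENNReal.ofReal (‖gradient f x‖ * w x)) :
    (∫⁻ x in Ω, geoDist (hatSet Ot) x0 x ∂μ0) < ⊤ := by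
  obtain ⟨hop, hpc, hsub⟩ := aux_hat hn Ω Ot hΩopen hΩconn hΩbdd hcov hcovnull
  obtain ⟨C, hC, hP⟩ := hP
  set U := hatSet Ot with hU
  have hfin := aux_geo_fin U hop hpc x0 (hsub hx0)
  have hμΩ : μ0 Ω ≠ 0 := by
    intro h
    apply hμ0ne
    rw [← Measure.measure_univ_eq_zero, ← union_compl_self Ω]
    exact measure_union_null h hμ0supp
  obtain ⟨k, hk⟩ : ∃ k : ℕ, μ0 {x ∈ Ω | (geoDist U x0 x).toReal ≤ k} ≠ 0 := by
    by_contra hcon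
    push Not at hcon
    apply hμΩ
    refine measure_mono_null ?_ (measure_iUnion_null hcon)
    intro x hx
    obtain ⟨k, hk⟩ := exists_nat_ge (geoDist U x0 x).toReal
    exact mem_iUnion.2 ⟨k, hx, hk⟩
  set f : En n → ℝ := fun y => max ((geoDist U x0 y).toReal - k) 0 with hf
  have hlip := aux_lip U hop hpc x0 (hsub hx0) k
  have hE : {x ∈ Ω | f x = 0} = {x ∈ Ω | (geoDist U x0 x).toReal ≤ k} := by
    ext x
    simp [hf]
  have h1 := hP f ⟨1, fun x hx => by
    obtain ⟨ε, hε, _, hl⟩ := hlip x hx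
    exact ⟨ε, hε, hl.mono inter_subset_left⟩⟩ (by rw [hE]; exact pos_iff_ne_zero.2 hk)
  rw [hE] at h1
  have h2 : ∫⁻ x in Ω, ENNReal.ofReal (‖gradient f x‖ * w x) < ⊤ := by
    refine lt_of_le_of_lt ?_ hwint.2
    refine setLIntegral_mono' hΩopen.measurableSet fun x hx => ?_
    obtain ⟨ε, hε, _, hl⟩ := hlip x (hsub hx)
    have hg : ‖gradient f x‖ ≤ 1 := by
      unfold gradient
      rw [LinearIsometryEquiv.norm_map]
      simpa using norm_fderiv_le_of_lipschitzOn ℝ (ball_mem_nhds x hε) hl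
    rw [← ofReal_norm_eq_enorm]
    apply ENNReal.ofReal_le_ofReal
    calc ‖gradient f x‖ * w x ≤ ‖gradient f x‖ * ‖w x‖ := by
          gcongr
          exact le_abs_self _
      _ ≤ 1 * ‖w x‖ := by gcongr
      _ = _ := one_mul _
  have h3 : ∫⁻ x in Ω, ENNReal.ofReal |f x| ∂μ0 < ⊤ := by
    refine lt_of_le_of_lt h1 (ENNReal.mul_lt_top (ENNReal.mul_lt_top ENNReal.ofReal_lt_top ?_) h2)
    exact ENNReal.add_lt_top.2 ⟨ENNReal.one_lt_top, ENNReal.div_lt_top (measure_ne_top _ _) hk⟩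
  calc ∫⁻ x in Ω, geoDist U x0 x ∂μ0
      ≤ ∫⁻ x in Ω, (ENNReal.ofReal |f x| + (k : ℝ≥0∞)) ∂μ0 := by
        refine setLIntegral_mono' hΩopen.measurableSet fun x hx => ?_
        rw [← ENNReal.ofReal_toReal (hfin x (hsub hx)), ← ENNReal.ofReal_natCast,
          ← ENNReal.ofReal_add (abs_nonneg _) (Nat.cast_nonneg _)]
        apply ENNReal.ofReal_le_ofReal
        have a1 := le_abs_self (f x)
        have a2 : (geoDist U x0 x).toReal - k ≤ f x := le_max_left _ _
        linarith
    _ = ∫⁻ x in Ω, ENNReal.ofReal |f x| ∂μ0 + ∫⁻ x in Ω, (k : ℝ≥0∞) ∂μ0 :=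
        lintegral_add_right _ measurable_const
    _ < ⊤ := by
        refine ENNReal.add_lt_top.2 ⟨h3, ?_⟩
        rw [setLIntegral_const]
        exact ENNReal.mul_lt_top (ENNReal.natCast_lt_top _) (measure_lt_top _ _)
end
end

section
/- Let Ω ⊂ ℝⁿ be a bounded domain, Ω̂ as below, and x0 ∈ Ω. For every y ∈ Ω̂ there exists a rectifiable curve γ_y : [0,1] → Ω̂ such that, writing γ(t,y) := γ_y(t): (a) γ(0,y) = y and γ(1,y) = x0 for all y ∈ Ω̂; (b) the map (t,y) ↦ γ(t,y) is measurable; (c) there is a constant C > 0 such that for all x, y ∈ Ω and all r ≤ d̂(x)/2 one has l(γ_y ∩ B(x,r)) ≤ C r, and l(γ_y) ≤ C d_Ω̂(y) for all y; (d) for every sufficiently small ε > 0 there exists δ > 0 such that γ_y ⊂ Ω̂_δ for every y ∈ Ω̂_ε. -/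
open MeasureTheory Metric Set
open scoped RealInnerProductSpace ENNReal NNReal

noncomputable section

namespace PathSys

set_option linter.unusedSectionVars false

section curves
variable {E : Type*} [NormedAddCommGroup E] [NormedSpace ℝ E]

lemma var_seg (a b : E) (S : Set ℝ) (D : ℝ≥0∞)
    (h : ∀ s ∈ S, ∀ t ∈ S, edist (AffineMap.lineMap a b s : E) (AffineMap.lineMap a b t) ≤ D) :
    eVariationOn (fun t : ℝ => (AffineMap.lineMap a b t : E)) S ≤ D := by
  refine iSup_le ?_
  rintro ⟨m, u, hu, hus⟩
  dsimp only
  have key : ∀ s t : ℝ, s ≤ t → edist (AffineMap.lineMap a b t : E) (AffineMap.lineMap a b s)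
      = ENNReal.ofReal ((t - s) * dist a b) := by
    intro s t hst
    rw [edist_dist, dist_lineMap_lineMap, Real.dist_eq, abs_of_nonneg (sub_nonneg.2 hst)]
  calc ∑ i ∈ Finset.range m, edist (AffineMap.lineMap a b (u (i+1)) : E) (AffineMap.lineMap a b (u i))
      = ∑ i ∈ Finset.range m, ENNReal.ofReal ((u (i+1) - u i) * dist a b) :=
        Finset.sum_congr rfl fun i _ => key _ _ (hu (Nat.le_succ i))
    _ = ENNReal.ofReal (∑ i ∈ Finset.range m, (u (i+1) - u i) * dist a b) := by
        rw [ENNReal.ofReal_sum_of_nonneg]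
        intro i _
        exact mul_nonneg (sub_nonneg.2 (hu (Nat.le_succ i))) dist_nonneg
    _ = ENNReal.ofReal ((u m - u 0) * dist a b) := by
        rw [← Finset.sum_mul, Finset.sum_range_sub]
    _ = edist (AffineMap.lineMap a b (u m) : E) (AffineMap.lineMap a b (u 0)) :=
        (key _ _ (hu (Nat.zero_le m))).symm
    _ ≤ D := h _ (hus m) _ (hus 0)

lemma var_union (f : ℝ → E) (s t : Set ℝ) (c : ℝ) (hs : ∀ x ∈ s, x ≤ c) (ht : ∀ x ∈ t, c < x)
    (D : ℝ≥0∞) (h : ∀ x ∈ s, ∀ y ∈ t, edist (f y) (f x) ≤ D) :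
    eVariationOn f (s ∪ t) ≤ eVariationOn f s + D + eVariationOn f t := by
  classical
  refine iSup_le ?_
  rintro ⟨m, u, hu, hus⟩
  dsimp only
  have hS : ∀ i, u i ≤ c → u i ∈ s := fun i hi =>
    (hus i).resolve_right fun h' => absurd (ht _ h') (not_lt.2 hi)
  have hT : ∀ i, c < u i → u i ∈ t := fun i hi =>
    (hus i).resolve_left fun h' => absurd (hs _ h') (not_le.2 hi)
  rw [Finset.range_eq_Ico]
  by_cases hex : ∃ k, c < u k
  · set k := Nat.find hex with hk
    have hk1 : c < u k := Nat.find_spec hex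
    have hk2 : ∀ i < k, u i ≤ c := fun i hi => not_lt.1 (Nat.find_min hex hi)
    by_cases hkm : k ≤ m
    · rw [← Finset.sum_Ico_consecutive _ (Nat.zero_le k) hkm]
      refine add_le_add ?_ (eVariationOn.sum_le_of_monotoneOn_Icc (hu.monotoneOn _)
        fun i hi => hT i (hk1.trans_le (hu hi.1)))
      rcases Nat.eq_zero_or_pos k with h0 | hpos
      · rw [h0]; simp
      · obtain ⟨j, hj⟩ := Nat.exists_eq_succ_of_ne_zero hpos.ne'
        rw [hj, Finset.sum_Ico_succ_top (Nat.zero_le j)]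
        refine add_le_add (eVariationOn.sum_le_of_monotoneOn_Icc (hu.monotoneOn _)
          fun i hi => hS i (hk2 i (by have := hi.2; omega))) ?_
        refine h _ (hS j (hk2 j (by omega))) _ (hT _ ?_)
        have : j + 1 = k := by omega
        rw [this]; exact hk1
    · refine le_trans (eVariationOn.sum_le_of_monotoneOn_Icc (hu.monotoneOn _)
          fun i hi => hS i (hk2 i (by have := hi.2; omega))) ?_
      rw [add_assoc]; exact le_self_add
  · push Not at hex
    refine le_trans (eVariationOn.sum_le_of_monotoneOn_Icc (hu.monotoneOn _)
          fun i hi => hS i (hex i)) ?_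
    rw [add_assoc]; exact le_self_add

/-- segment from a to b followed by g -/
def cc (a b : E) (g : ℝ → E) : ℝ → E := fun t =>
  if t ≤ 1/2 then AffineMap.lineMap a b (2*t) else g (2*t-1)

lemma cc_joint (b : E) (g : ℝ → E) (hg : Continuous g) (hb : g 0 = b) :
    Continuous (fun q : ℝ × E => cc q.2 b g q.1) := by
  unfold cc
  refine Continuous.if_le ?_ (by fun_prop) (by fun_prop) (by fun_prop) ?_
  · simp only [AffineMap.lineMap_apply_module]; fun_prop
  · intro q hq
    rw [hq]; norm_num [hb]

lemma cc_cont (a b : E) (g : ℝ → E) (hg : Continuous g) (hb : g 0 = b) :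
    Continuous (cc a b g) :=
  (cc_joint b g hg hb).comp (by fun_prop : Continuous (fun t : ℝ => (t, a)))

lemma cc_zero (a b : E) (g : ℝ → E) : cc a b g 0 = a := by
  unfold cc; simp

lemma cc_one (a b : E) (g : ℝ → E) : cc a b g 1 = g 1 := by
  unfold cc; norm_num

lemma cc_mem (a b : E) (g : ℝ → E) (P : E → Prop) (h1 : ∀ w ∈ segment ℝ a b, P w)
    (h2 : ∀ t ∈ Icc (0:ℝ) 1, P (g t)) : ∀ t ∈ Icc (0:ℝ) 1, P (cc a b g t) := by
  intro t ht
  unfold cc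
  split_ifs with h
  · apply h1
    rw [segment_eq_image_lineMap]
    exact ⟨2*t, ⟨by linarith [ht.1], by linarith⟩, rfl⟩
  · exact h2 _ ⟨by linarith, by linarith [ht.2]⟩

lemma cc_left (a b : E) (g : ℝ → E) (S : Set ℝ) (D : ℝ≥0∞) (hS : S ⊆ Icc 0 (1/2))
    (h : ∀ s ∈ S, ∀ t ∈ S, edist (cc a b g s) (cc a b g t) ≤ D) :
    eVariationOn (cc a b g) S ≤ D := by
  have e : EqOn (cc a b g) ((fun t : ℝ => (AffineMap.lineMap a b t : E)) ∘ (fun t => 2 * t)) S := by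
    intro t ht
    unfold cc
    simp [if_pos (by simpa using (hS ht).2)]
  rw [eVariationOn.eq_of_eqOn e]
  refine le_trans (eVariationOn.comp_le_of_monotoneOn _ (s := (fun t : ℝ => 2 * t) '' S) _ ?_
    (mapsTo_image _ _)) ?_
  · intro x _ y _ hxy
    dsimp; linarith
  · apply var_seg
    rintro _ ⟨s, hs, rfl⟩ _ ⟨t, ht, rfl⟩
    have := h s hs t ht
    rw [e hs, e ht] at this
    exact this

lemma cc_right (a b : E) (g : ℝ → E) (S T : Set ℝ) (hb : g 0 = b) (hS : S ⊆ Icc (1/2) 1)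
    (hT : ∀ t ∈ S, 2 * t - 1 ∈ T) :
    eVariationOn (cc a b g) S ≤ eVariationOn g T := by
  have e : EqOn (cc a b g) (g ∘ (fun t => 2 * t - 1)) S := by
    intro t ht
    unfold cc
    simp only [Function.comp]
    split_ifs with h
    · have : t = 1/2 := le_antisymm h (hS ht).1
      rw [this]; norm_num [hb]
    · rfl
  rw [eVariationOn.eq_of_eqOn e]
  refine eVariationOn.comp_le_of_monotoneOn _ _ ?_ hT
  intro x _ y _ hxy
  dsimp; linarith

lemma cc_var (a b : E) (g : ℝ → E) (hb : g 0 = b) :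
    eVariationOn (cc a b g) (Icc 0 1) ≤ edist a b + eVariationOn g (Icc 0 1) := by
  have := eVariationOn.Icc_add_Icc (cc a b g) (s := univ) (a := (0:ℝ)) (b := 1/2) (c := 1)
    (by norm_num) (by norm_num) (mem_univ _)
  simp only [univ_inter] at this
  rw [← this]
  refine add_le_add (cc_left a b g _ _ subset_rfl ?_) (cc_right a b g _ _ hb subset_rfl ?_)
  · intro s hs t ht
    unfold cc
    rw [if_pos hs.2, if_pos ht.2, edist_dist, edist_dist, dist_lineMap_lineMap]
    apply ENNReal.ofReal_le_ofReal
    have : dist (2*s) (2*t) ≤ 1 := by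
      rw [Real.dist_eq, abs_le]
      constructor <;> linarith [hs.1, hs.2, ht.1, ht.2]
    calc dist (2*s) (2*t) * dist a b ≤ 1 * dist a b := by gcongr
      _ = _ := one_mul _
  · rintro t ⟨h1, h2⟩
    constructor <;> linarith

lemma edist_ball {x p q : E} {r : ℝ} (hp : p ∈ ball x r) (hq : q ∈ ball x r) :
    edist p q ≤ ENNReal.ofReal (2 * r) := by
  rw [edist_dist]
  apply ENNReal.ofReal_le_ofReal
  rw [mem_ball] at hp hq
  linarith [dist_triangle_right p q x]

lemma cc_ball (a b : E) (g : ℝ → E) (hb : g 0 = b) (x : E) (r : ℝ) :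
    eVariationOn (cc a b g) {t ∈ Icc (0:ℝ) 1 | cc a b g t ∈ ball x r} ≤
      ENNReal.ofReal (4 * r) + eVariationOn g {t ∈ Icc (0:ℝ) 1 | g t ∈ ball x r} := by
  have hsub : {t ∈ Icc (0:ℝ) 1 | cc a b g t ∈ ball x r} ⊆
      {t ∈ Icc (0:ℝ) (1/2) | cc a b g t ∈ ball x r} ∪ {t ∈ Ioc (1/2:ℝ) 1 | cc a b g t ∈ ball x r} := by
    rintro t ⟨⟨h1, h2⟩, h3⟩
    rcases le_or_gt t (1/2) with h | h
    · exact Or.inl ⟨⟨h1, h⟩, h3⟩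
    · exact Or.inr ⟨⟨h, h2⟩, h3⟩
  refine (eVariationOn.mono _ hsub).trans ?_
  refine (var_union _ _ _ (1/2) (fun t ht => ht.1.2) (fun t ht => ht.1.1)
    (ENNReal.ofReal (2 * r)) (fun s hs t ht => edist_ball ht.2 hs.2)).trans ?_
  refine add_le_add ?_ (cc_right a b g _ _ hb ?_ ?_)
  · refine (add_le_add (cc_left a b g _ (ENNReal.ofReal (2 * r)) (fun t ht => ht.1)
      (fun s hs t ht => edist_ball hs.2 ht.2)) le_rfl).trans ?_
    rcases le_total 0 r with hr | hr
    · rw [← ENNReal.ofReal_add (by positivity) (by positivity)]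
      apply ENNReal.ofReal_le_ofReal; linarith
    · rw [ENNReal.ofReal_of_nonpos (by linarith)]; simp
  · intro t ht; exact ⟨ht.1.1.le, ht.1.2⟩
  · rintro t ⟨⟨h1, h2⟩, h3⟩
    refine ⟨⟨by linarith, by linarith⟩, ?_⟩
    unfold cc at h3
    rwa [if_neg (not_le.2 h1)] at h3

lemma cc_ball' (a b : E) (g : ℝ → E) (hb : g 0 = b) (x : E) (r : ℝ)
    (hd : ∀ w ∈ segment ℝ a b, w ∉ ball x r) :
    eVariationOn (cc a b g) {t ∈ Icc (0:ℝ) 1 | cc a b g t ∈ ball x r} ≤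
      eVariationOn g {t ∈ Icc (0:ℝ) 1 | g t ∈ ball x r} := by
  have key : ∀ t ∈ {t ∈ Icc (0:ℝ) 1 | cc a b g t ∈ ball x r}, 1/2 < t := by
    rintro t ⟨⟨h1, h2⟩, h3⟩
    by_contra h
    push Not at h
    unfold cc at h3
    rw [if_pos h] at h3
    refine hd _ ?_ h3
    rw [segment_eq_image_lineMap]
    exact ⟨2*t, ⟨by linarith, by linarith⟩, rfl⟩
  refine cc_right a b g _ _ hb ?_ ?_
  · intro t ht; exact ⟨(key t ht).le, ht.1.2⟩
  · intro t ht
    have h1 := key t ht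
    refine ⟨⟨by linarith, by linarith [ht.1.2]⟩, ?_⟩
    have h3 := ht.2
    unfold cc at h3
    rwa [if_neg (not_le.2 h1)] at h3

/-- The graph on Z -/
def Gr (Z : Set E) (d : E → ℝ) : SimpleGraph E where
  Adj u v := u ≠ v ∧ u ∈ Z ∧ v ∈ Z ∧ dist u v < d u / 2 ∧ dist u v < d v / 2
  symm := ⟨fun u v h => ⟨h.1.symm, h.2.2.1, h.2.1, by rw [dist_comm]; exact h.2.2.2.2,
    by rw [dist_comm]; exact h.2.2.2.1⟩⟩
  loopless := ⟨fun u h => h.1 rfl⟩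

open Classical in
lemma walk_curve (Z : Set E) (d : E → ℝ) (hd : ∀ z ∈ Z, 0 < d z) {z w : E}
    (p : (Gr Z d).Walk z w) (hw : w ∈ Z) :
    z ∈ Z ∧ (∀ v ∈ p.support, v ∈ Z) ∧ ∃ g : ℝ → E, Continuous g ∧ g 0 = z ∧ g 1 = w ∧
      (∀ t ∈ Icc (0:ℝ) 1, ∃ v ∈ Z, g t ∈ ball v (d v / 2)) ∧
      eVariationOn g (Icc 0 1) ≤ ENNReal.ofReal (p.support.map d).sum ∧
      ∀ x r, eVariationOn g {t ∈ Icc (0:ℝ) 1 | g t ∈ ball x r} ≤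
        ENNReal.ofReal (4 * r) *
          (p.support.countP (fun v => (ball v (d v / 2) ∩ ball x r).Nonempty) : ℕ) := by
  induction p with
  | nil =>
    rename_i u
    refine ⟨hw, by simpa using hw, fun _ => u, continuous_const, rfl, rfl, ?_, ?_, ?_⟩
    · intro t _
      exact ⟨u, hw, mem_ball_self (half_pos (hd u hw))⟩
    · rw [eVariationOn.constant_on]
      · simp
      · exact Set.subsingleton_of_subset_singleton (a := u) (by rintro _ ⟨_, _, rfl⟩; rfl)
    · intro x r
      rw [eVariationOn.constant_on]
      · simp
      · exact Set.subsingleton_of_subset_singleton (a := u) (by rintro _ ⟨_, _, rfl⟩; rfl)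
  | cons h p ih =>
    rename_i u v w
    obtain ⟨hv, hsup, g, gc, g0, g1, gU, gv, gb⟩ := ih hw
    have hadj := h
    obtain ⟨hne, huZ, _, h1, h2⟩ := hadj
    have hseg : ∀ q ∈ segment ℝ u v, q ∈ ball u (d u / 2) :=
      (convex_ball u (d u / 2)).segment_subset (mem_ball_self (half_pos (hd u huZ)))
        (by rw [mem_ball, dist_comm]; exact h1)
    refine ⟨huZ, ?_, cc u v g, cc_cont u v g gc g0, cc_zero _ _ _, (cc_one _ _ _).trans g1, ?_, ?_, ?_⟩
    · intro a ha
      rw [SimpleGraph.Walk.support_cons, List.mem_cons] at ha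
      rcases ha with rfl | ha
      · exact huZ
      · exact hsup a ha
    · exact cc_mem u v g (fun q => ∃ v ∈ Z, q ∈ ball v (d v / 2))
        (fun q hq => ⟨u, huZ, hseg q hq⟩) gU
    · refine (cc_var u v g g0).trans ?_
      rw [SimpleGraph.Walk.support_cons, List.map_cons, List.sum_cons, ENNReal.ofReal_add (hd u huZ).le]
      · refine add_le_add ?_ gv
        rw [edist_dist]
        apply ENNReal.ofReal_le_ofReal
        linarith [hd u huZ]
      · apply List.sum_nonneg
        intro a ha
        obtain ⟨b, hb, rfl⟩ := List.mem_map.1 ha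
        exact (hd b (hsup b hb)).le
    · intro x r
      rw [SimpleGraph.Walk.support_cons, List.countP_cons]
      by_cases hm : (ball u (d u / 2) ∩ ball x r).Nonempty
      · refine (cc_ball u v g g0 x r).trans ?_
        simp only [hm, decide_true, if_true]
        push_cast
        rw [mul_add, mul_one, add_comm]
        exact add_le_add (gb x r) le_rfl
      · refine (cc_ball' u v g g0 x r ?_).trans ?_
        · intro q hq hq'
          exact hm ⟨q, hseg q hq, hq'⟩
        · simp only [hm, decide_false]
          simpa using gb x r

end curves

section net
variable {E : Type*} [NormedAddCommGroup E] [NormedSpace ℝ E]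

lemma pack [ProperSpace E] (κ : ℝ) (hκ : 0 < κ) : ∃ N : ℕ, ∀ (x : E) (R : ℝ), 0 < R →
    ∀ S : Finset E, (∀ v ∈ S, dist v x ≤ 2 * R) →
      (∀ v ∈ S, ∀ w ∈ S, v ≠ w → κ * R ≤ dist v w) → S.card ≤ N := by
  classical
  obtain ⟨t, -, htf, htc⟩ := (isCompact_closedBall (0:E) 2).finite_cover_balls
    (e := κ / 2) (by positivity)
  refine ⟨htf.toFinset.card, fun x R hR S h1 h2 => ?_⟩
  have key : ∀ v ∈ S, ∃ c ∈ t, dist (R⁻¹ • (v - x)) c < κ / 2 := by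
    intro v hv
    have : R⁻¹ • (v - x) ∈ closedBall (0:E) 2 := by
      rw [mem_closedBall, dist_zero_right, norm_smul, Real.norm_eq_abs, abs_of_pos (inv_pos.2 hR),
        ← dist_eq_norm, inv_mul_le_iff₀ hR]
      linarith [h1 v hv]
    simpa using htc this
  choose! f hf hf' using key
  refine Finset.card_le_card_of_injOn f (fun v hv => by simpa using hf v hv) ?_
  intro v hv w hw hvw
  by_contra hne
  have h3 := h2 v hv w hw hne
  have h4 : dist (R⁻¹ • (v - x)) (R⁻¹ • (w - x)) < κ := by
    have a := hf' v hv
    have b := hf' w hw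
    have hvw' : f v = f w := hvw
    rw [← hvw'] at b
    linarith [dist_triangle_right (R⁻¹ • (v - x)) (R⁻¹ • (w - x)) (f v)]
  rw [dist_smul₀, dist_sub_right, Real.norm_eq_abs, abs_of_pos (inv_pos.2 hR),
    inv_mul_lt_iff₀ hR] at h4
  linarith

lemma sep_finite [ProperSpace E] (S : Set E) (hS : Bornology.IsBounded S) (η : ℝ) (hη : 0 < η)
    (h : ∀ v ∈ S, ∀ w ∈ S, v ≠ w → η ≤ dist v w) : S.Finite := by
  classical
  obtain ⟨R, hR⟩ := hS.subset_closedBall (0:E)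
  set R' := max R 1 with hR'
  have hpos : 0 < R' := lt_of_lt_of_le one_pos (le_max_right _ _)
  obtain ⟨N, hN⟩ := pack (E := E) (η / R') (by positivity)
  by_contra hinf
  obtain ⟨F, hF, hc⟩ := Set.Infinite.exists_subset_card_eq hinf (N + 1)
  have := hN 0 R' hpos F ?_ ?_
  · omega
  · intro v hv
    have := hR (hF hv)
    rw [mem_closedBall] at this
    linarith [le_max_left R 1]
  · intro v hv w hw hne
    rw [div_mul_cancel₀ _ hpos.ne']
    exact h v (hF hv) w (hF hw) hne

lemma net (U : Set E) (d : E → ℝ) (hd : ∀ x ∈ U, 0 < d x) (hL : ∀ x y, d x ≤ d y + dist x y)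
    (x0 : E) (hx0 : x0 ∈ U) :
    ∃ Z ⊆ U, x0 ∈ Z ∧ (∀ u ∈ Z, ∀ v ∈ Z, u ≠ v → d u / 16 ≤ dist u v) ∧
      ∀ y ∈ U, ∃ z ∈ Z, dist y z < d z / 8 := by
  have hch0 : ∀ c ⊆ {Z : Set E | Z ⊆ U ∧ ∀ u ∈ Z, ∀ v ∈ Z, u ≠ v → d u / 16 ≤ dist u v},
      IsChain (fun x1 x2 => x1 ⊆ x2) c → c.Nonempty →
      ∃ ub ∈ {Z : Set E | Z ⊆ U ∧ ∀ u ∈ Z, ∀ v ∈ Z, u ≠ v → d u / 16 ≤ dist u v},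
        ∀ s ∈ c, s ⊆ ub := by
    intro c hc hch hne
    refine ⟨⋃₀ c, ⟨sUnion_subset fun s hs => (hc hs).1, ?_⟩, fun s hs => subset_sUnion_of_mem hs⟩
    rintro u ⟨s, hs, hus⟩ v ⟨t, ht, hvt⟩ huv
    rcases hch.total hs ht with h | h
    · exact (hc ht).2 u (h hus) v hvt huv
    · exact (hc hs).2 u hus v (h hvt) huv
  have hsg : {x0} ∈ {Z : Set E | Z ⊆ U ∧ ∀ u ∈ Z, ∀ v ∈ Z, u ≠ v → d u / 16 ≤ dist u v} := by
    refine ⟨by simpa using hx0, ?_⟩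
    rintro u rfl v rfl h
    exact absurd rfl h
  obtain ⟨Z, hZ0, hZ⟩ := zorn_subset_nonempty _ hch0 {x0} hsg
  · have hZ1 := hZ.prop
    refine ⟨Z, hZ1.1, hZ0 rfl, hZ1.2, ?_⟩
    intro y hy
    by_contra hcon
    push Not at hcon
    have hyZ : y ∉ Z := fun h => by
      have := hcon y h
      rw [dist_self] at this
      linarith [hd y hy]
    have hyd : ∀ z ∈ Z, d y / 16 ≤ dist y z := by
      intro z hz
      linarith [hL y z, hcon z hz, dist_nonneg (x := y) (y := z)]
    have hins : insert y Z ∈ {Z : Set E | Z ⊆ U ∧ ∀ u ∈ Z, ∀ v ∈ Z, u ≠ v → d u / 16 ≤ dist u v} := by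
      refine ⟨insert_subset hy hZ1.1, ?_⟩
      rintro u (rfl | hu) v (rfl | hv) hne
      · exact absurd rfl hne
      · exact hyd v hv
      · rw [dist_comm]; linarith [hcon u hu, hd u (hZ1.1 hu)]
      · exact hZ1.2 u hu v hv hne
    exact hyZ (hZ.le_of_ge hins (subset_insert y Z) (mem_insert y Z))

lemma adj_or_eq {Z : Set E} {d : E → ℝ} (hL : ∀ x y, d x ≤ d y + dist x y)
    {z z' p p' : E} (hz : z ∈ Z) (hz' : z' ∈ Z) (h1 : dist p z < d z / 8) (h2 : dist p' z' < d z' / 8)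
    (h3 : dist p p' ≤ d p / 16) : z = z' ∨ (Gr Z d).Adj z z' := by
  by_cases h : z = z'
  · exact Or.inl h
  · right
    have a1 := hL z p
    have a2 := hL p z
    have a3 := hL p p'
    have a4 := hL p' p
    have a5 := hL p' z'
    have a6 := hL z' p'
    have t1 := dist_triangle4 z p p' z'
    rw [dist_comm z p] at a1 t1
    rw [dist_comm p' p] at a4
    rw [dist_comm z' p'] at a6
    exact ⟨h, hz, hz', by linarith, by linarith⟩

lemma greedy (U Z : Set E) (d : E → ℝ) (hd : ∀ x ∈ U, 0 < d x) (hL : ∀ x y, d x ≤ d y + dist x y)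
    (hdc : Continuous d) (hcov : ∀ y ∈ U, ∃ z ∈ Z, dist y z < d z / 8)
    (x0 : E) (hx0 : x0 ∈ Z) (hx0U : x0 ∈ U) (σ : ℝ → E) (hσ : ContinuousOn σ (Icc 0 1))
    (hσU : MapsTo σ (Icc 0 1) U) (hσ1 : σ 1 = x0) (z : E) (hz : z ∈ Z) (hzσ : dist (σ 0) z < d z / 8) :
    ∃ p : (Gr Z d).Walk z x0, ENNReal.ofReal (p.support.map d).sum ≤
      20 * eVariationOn σ (Icc 0 1) + ENNReal.ofReal (3 * d x0) := by
  obtain ⟨t₁, ht₁, hmin⟩ := isCompact_Icc.exists_isMinOn (nonempty_Icc.2 zero_le_one)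
    (hdc.comp_continuousOn hσ)
  set η := d (σ t₁) with hη
  have hη0 : 0 < η := hd _ (hσU ht₁)
  have hηle : ∀ t ∈ Icc (0:ℝ) 1, η ≤ d (σ t) := fun t ht => hmin ht
  obtain ⟨h, hh, huc⟩ := Metric.uniformContinuousOn_iff.1
    (isCompact_Icc.uniformContinuousOn_of_continuous hσ) (η / 16) (by positivity)
  have dx0 := hd x0 hx0U
  have claim : ∀ k : ℕ, ∀ t ∈ Icc (0:ℝ) 1, 1 - t ≤ k * h → ∀ z ∈ Z, dist (σ t) z < d z / 8 →
      ∃ p : (Gr Z d).Walk z x0, ENNReal.ofReal (p.support.map d).sum ≤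
        20 * eVariationOn σ (Icc t 1) + ENNReal.ofReal (3 * d x0) := by
    intro k
    induction k with
    | zero =>
      intro t ht htk z hz hzt
      have ht1 : t = 1 := le_antisymm ht.2 (by simpa using htk)
      rw [ht1, hσ1] at hzt
      rcases adj_or_eq hL hz hx0 hzt (by rw [dist_self]; linarith) (by rw [dist_self]; linarith) with e | e
      · subst e
        refine ⟨SimpleGraph.Walk.nil, le_trans ?_ le_add_self⟩
        apply ENNReal.ofReal_le_ofReal
        simp; linarith
      · refine ⟨SimpleGraph.Walk.cons e SimpleGraph.Walk.nil, le_trans ?_ le_add_self⟩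
        apply ENNReal.ofReal_le_ofReal
        simp
        have := hL z x0
        rw [dist_comm] at this
        linarith
    | succ k ih =>
      intro t ht htk z hz hzt
      have hzp : d z ≤ 8 / 7 * d (σ t) := by
        have := hL z (σ t)
        rw [dist_comm] at this
        linarith
      by_cases hfar : d (σ t) / 16 ≤ dist (σ t) (σ 1)
      · have hcont : ContinuousOn (fun s => dist (σ t) (σ s)) (Icc t 1) :=
          (continuous_const.dist continuous_id).comp_continuousOn (hσ.mono (Icc_subset_Icc_left ht.1))
        obtain ⟨s, hs, hs'⟩ := intermediate_value_Icc ht.2 hcont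
          (show d (σ t) / 16 ∈ _ from ⟨by rw [dist_self]; linarith [hηle t ht], hfar⟩)
        dsimp only at hs'
        have hsI : s ∈ Icc (0:ℝ) 1 := ⟨ht.1.trans hs.1, hs.2⟩
        have hst : h ≤ s - t := by
          by_contra hlt
          push Not at hlt
          have := huc t ht s hsI (by rw [Real.dist_eq, abs_sub_comm, abs_of_nonneg (by linarith [hs.1])]; exact hlt)
          linarith [hηle t ht]
        obtain ⟨z', hz', hzs'⟩ := hcov _ (hσU hsI)
        obtain ⟨p, hp⟩ := ih s hsI (by push_cast at htk; linarith) z' hz' hzs'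
        have hvar : ENNReal.ofReal (d (σ t) / 16) + eVariationOn σ (Icc s 1) ≤ eVariationOn σ (Icc t 1) := by
          have := eVariationOn.Icc_add_Icc σ (s := univ) hs.1 hs.2 (mem_univ _)
          simp only [univ_inter] at this
          rw [← this]
          refine add_le_add ?_ le_rfl
          rw [← hs', ← edist_dist]
          exact eVariationOn.edist_le _ (left_mem_Icc.2 hs.1) (right_mem_Icc.2 hs.1)
        rcases adj_or_eq hL hz hz' hzt hzs' hs'.le with e | e
        · subst e
          refine ⟨p, hp.trans ?_⟩
          gcongr
          exact eVariationOn.mono _ (Icc_subset_Icc_left hs.1)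
        · refine ⟨SimpleGraph.Walk.cons e p, ?_⟩
          rw [SimpleGraph.Walk.support_cons, List.map_cons, List.sum_cons]
          refine ENNReal.ofReal_add_le.trans ?_
          calc ENNReal.ofReal (d z) + ENNReal.ofReal (p.support.map d).sum
              ≤ 20 * ENNReal.ofReal (d (σ t) / 16) +
                (20 * eVariationOn σ (Icc s 1) + ENNReal.ofReal (3 * d x0)) := by
                refine add_le_add ?_ hp
                rw [show (20 : ℝ≥0∞) = ENNReal.ofReal 20 by norm_num, ← ENNReal.ofReal_mul (by norm_num)]
                apply ENNReal.ofReal_le_ofReal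
                linarith [hηle t ht]
            _ = 20 * (ENNReal.ofReal (d (σ t) / 16) + eVariationOn σ (Icc s 1)) +
                ENNReal.ofReal (3 * d x0) := by rw [mul_add, add_assoc]
            _ ≤ _ := by gcongr
      · push Not at hfar
        rw [hσ1] at hfar
        have hb : d (σ t) ≤ 16 / 15 * d x0 := by linarith [hL (σ t) x0]
        rcases adj_or_eq hL hz hx0 hzt (by rw [dist_self]; linarith) hfar.le with e | e
        · subst e
          refine ⟨SimpleGraph.Walk.nil, le_trans ?_ le_add_self⟩
          apply ENNReal.ofReal_le_ofReal
          simp; linarith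
        · refine ⟨SimpleGraph.Walk.cons e SimpleGraph.Walk.nil, le_trans ?_ le_add_self⟩
          apply ENNReal.ofReal_le_ofReal
          simp
          linarith
  obtain ⟨k, hk⟩ := exists_nat_ge (1 / h)
  refine claim k 0 ⟨le_rfl, zero_le_one⟩ ?_ z hz hzσ
  rw [div_le_iff₀ hh] at hk
  linarith

end net

section main
variable {E : Type*} [NormedAddCommGroup E] [NormedSpace ℝ E]

lemma sum_bypass_le [DecidableEq E] {Z : Set E} {d : E → ℝ} {z w : E} (p : (Gr Z d).Walk z w)
    (h : ∀ v ∈ p.support, 0 ≤ d v) :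
    (p.bypass.support.map d).sum ≤ (p.support.map d).sum := by
  obtain ⟨l, hl, hs⟩ := p.bypass_isPath.support_nodup.subperm p.support_bypass_subset_support
  rw [← (hl.map d).sum_eq]
  refine (hs.map d).sum_le_sum ?_
  intro a ha
  obtain ⟨b, hb, rfl⟩ := List.mem_map.1 ha
  exact h b hb

lemma zcurve [ProperSpace E] (U Z : Set E) (d : E → ℝ) (hd : ∀ x ∈ U, 0 < d x)
    (hdU : ∀ x, 0 < d x → x ∈ U)
    (hL : ∀ x y, d x ≤ d y + dist x y) (hU : IsPathConnected U)
    (hdc : Continuous d) (hZU : Z ⊆ U) (hsep : ∀ u ∈ Z, ∀ v ∈ Z, u ≠ v → d u / 16 ≤ dist u v)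
    (hcov : ∀ y ∈ U, ∃ z ∈ Z, dist y z < d z / 8)
    (x0 : E) (hx0 : x0 ∈ Z) :
    ∃ N : ℕ, ∀ z ∈ Z, ∃ g : ℝ → E, Continuous g ∧ g 0 = z ∧ g 1 = x0 ∧
      (∀ t ∈ Icc (0:ℝ) 1, g t ∈ U) ∧ (z = x0 → eVariationOn g (Icc 0 1) = 0) ∧
      eVariationOn g (Icc 0 1) < ⊤ ∧
      (∀ x ∈ U, ∀ r ≤ d x / 2, eVariationOn g {t ∈ Icc (0:ℝ) 1 | g t ∈ ball x r} ≤
        ENNReal.ofReal (4 * r) * N) ∧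
      ∀ σ : ℝ → E, ContinuousOn σ (Icc 0 1) → MapsTo σ (Icc 0 1) U → σ 1 = x0 →
        dist (σ 0) z < d z / 8 →
        eVariationOn g (Icc 0 1) ≤ 2 * (20 * eVariationOn σ (Icc 0 1) + ENNReal.ofReal (3 * d x0)) := by
  classical
  obtain ⟨N, hN⟩ := pack (E := E) (1/48) (by norm_num)
  refine ⟨N, fun z hz => ?_⟩
  by_cases hzx : z = x0
  · have h0 : ∀ S : Set ℝ, eVariationOn (fun _ : ℝ => x0) S = 0 := fun S =>
      eVariationOn.constant_on (Set.subsingleton_of_subset_singleton (a := x0)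
        (by rintro _ ⟨_, _, rfl⟩; rfl))
    exact ⟨fun _ => x0, continuous_const, hzx.symm, rfl, fun _ _ => hZU hx0, fun _ => h0 _,
      by rw [h0]; exact ENNReal.zero_lt_top, fun _ _ _ _ => by rw [h0]; exact zero_le,
      fun _ _ _ _ _ => by rw [h0]; exact zero_le⟩
  have hdZ : ∀ v ∈ Z, 0 < d v := fun v hv => hd v (hZU hv)
  have dx0 := hdZ x0 hx0
  have hsupp : ∀ p : (Gr Z d).Walk z x0, ∀ v ∈ p.support, 0 ≤ d v := fun p v hv =>
    (hdZ v ((walk_curve Z d hdZ p hx0).2.1 v hv)).le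
  -- a walk exists
  have hex : Nonempty ((Gr Z d).Walk z x0) := by
    obtain ⟨pa, hpa⟩ := hU.joinedIn z (hZU hz) x0 (hZU hx0)
    obtain ⟨p, -⟩ := greedy U Z d hd hL hdc hcov x0 hx0 (hZU hx0) pa.extend
      pa.continuous_extend.continuousOn (fun t ht => by rw [pa.extend_apply ht]; exact hpa _)
      (by simp) z hz (by simpa using hdZ z hz)
    exact ⟨p⟩
  set W : (Gr Z d).Walk z x0 → ℝ := fun p => (p.support.map d).sum with hW
  have hWlow : ∀ p, d x0 ≤ W p := by
    intro p
    refine List.single_le_sum ?_ _ (List.mem_map.2 ⟨x0, p.end_mem_support, rfl⟩)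
    intro a ha
    obtain ⟨b, hb, rfl⟩ := List.mem_map.1 ha
    exact hsupp p b hb
  have hbdd : BddBelow (range W) := ⟨d x0, by rintro _ ⟨p, rfl⟩; exact hWlow p⟩
  have hinf : d x0 ≤ ⨅ p, W p := le_ciInf hWlow
  obtain ⟨q, hq⟩ := exists_lt_of_ciInf_lt (show (⨅ p, W p) < 2 * ⨅ p, W p by linarith)
  have hq2 : ∀ p, W q.bypass ≤ 2 * W p := by
    intro p
    have h1 : W q.bypass ≤ W q := sum_bypass_le q (hsupp q)
    have h2 := ciInf_le hbdd p
    linarith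
  obtain ⟨-, hpZ, g, gc, g0, g1, gU, gv, gb⟩ := walk_curve Z d hdZ q.bypass hx0
  refine ⟨g, gc, g0, g1, ?_, fun h => absurd h hzx, gv.trans_lt ENNReal.ofReal_lt_top, ?_, ?_⟩
  · intro t ht
    obtain ⟨v, hv, hvt⟩ := gU t ht
    rw [mem_ball, dist_comm] at hvt
    apply hdU
    linarith [hL v (g t), hdZ v hv]
  · intro x hx r hr
    refine (gb x r).trans ?_
    gcongr
    rw [List.countP_eq_length_filter, ← List.toFinset_card_of_nodup
      (q.bypass_isPath.support_nodup.filter _)]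
    have key : ∀ v ∈ (q.bypass.support.filter
        (fun v => decide (ball v (d v / 2) ∩ ball x r).Nonempty)).toFinset,
        v ∈ Z ∧ d x / 3 ≤ d v ∧ dist v x ≤ 2 * d x := by
      intro v hv
      rw [List.mem_toFinset, List.mem_filter, decide_eq_true_eq] at hv
      obtain ⟨hv1, w, hw1, hw2⟩ := hv
      rw [mem_ball] at hw1 hw2
      have a1 := hL x w
      have a2 := hL w x
      have a3 := hL v w
      have a4 := hL w v
      have a5 := dist_triangle v w x
      rw [dist_comm x w] at a1
      rw [dist_comm v w] at a3 a5
      exact ⟨hpZ v hv1, by linarith, by linarith⟩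
    refine hN x (d x) (hd x hx) _ (fun v hv => (key v hv).2.2) ?_
    intro v hv w hw hne
    have := hsep v (key v hv).1 w (key w hw).1 hne
    linarith [(key v hv).2.1]
  · intro σ h1 h2 h3 h4
    obtain ⟨p, hp⟩ := greedy U Z d hd hL hdc hcov x0 hx0 (hZU hx0) σ h1 h2 h3 z hz h4
    refine gv.trans ((ENNReal.ofReal_le_ofReal (hq2 p)).trans ?_)
    rw [ENNReal.ofReal_mul (by norm_num)]
    refine mul_le_mul' (by norm_num) hp

end main

lemma main {n : ℕ} (U : Set (En n)) (d : En n → ℝ) (hUo : IsOpen U) (hUc : IsConnected U)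
    (hUb : Bornology.IsBounded U) (hd : ∀ x, x ∈ U ↔ 0 < d x)
    (hL : ∀ x y, d x ≤ d y + dist x y) (hdc : Continuous d) (x0 : En n) (hx0 : x0 ∈ U) :
    ∃ γ : En n → ℝ → En n,
      (∀ y ∈ U,
        ContinuousOn (γ y) (Set.Icc 0 1) ∧
        (∀ t ∈ Set.Icc (0:ℝ) 1, γ y t ∈ U) ∧
        eVariationOn (γ y) (Set.Icc 0 1) < ⊤ ∧
        γ y 0 = y ∧ γ y 1 = x0) ∧
      Measurable (fun q : ℝ × En n => γ q.2 q.1) ∧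
      (∃ C : ℝ, 0 < C ∧
        (∀ x ∈ U, ∀ y ∈ U, ∀ r : ℝ, r ≤ d x / 2 →
          eVariationOn (γ y) {t ∈ Set.Icc (0:ℝ) 1 | γ y t ∈ Metric.ball x r} ≤
            ENNReal.ofReal (C * r)) ∧
        (∀ y ∈ U,
          eVariationOn (γ y) (Set.Icc 0 1) ≤
            ENNReal.ofReal C * geoDist U x0 y)) ∧
      (∃ ε0 : ℝ, 0 < ε0 ∧ ∀ ε : ℝ, 0 < ε → ε < ε0 → ∃ δ : ℝ, 0 < δ ∧
        ∀ y ∈ U, ε < d y →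
          ∀ t ∈ Set.Icc (0:ℝ) 1, δ < d (γ y t)) := by
  classical
  have hd1 : ∀ x ∈ U, 0 < d x := fun x hx => (hd x).1 hx
  obtain ⟨Z, hZU, hx0Z, hsep, hcov⟩ := net U d hd1 hL x0 hx0
  have hdZ : ∀ v ∈ Z, 0 < d v := fun v hv => hd1 v (hZU hv)
  have dx0 := hdZ x0 hx0Z
  obtain ⟨N, hN⟩ := zcurve U Z d hd1 (fun x hx => (hd x).2 hx) hL
    (hUo.isConnected_iff_isPathConnected.1 hUc) hdc hZU hsep hcov x0 hx0Z
  choose! g gc g0 g1 gU gx0 gfin gb gσ using hN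
  have hZc : Z.Countable := by
    refine Set.PairwiseDisjoint.countable_of_isOpen (s := fun z => ball z (d z / 32)) ?_
      (fun _ _ => isOpen_ball) (fun z hz => ⟨z, mem_ball_self (by linarith [hdZ z hz])⟩)
    intro u hu v hv huv
    apply ball_disjoint_ball
    have h1 := hsep u hu v hv huv
    have h2 := hsep v hv u hu huv.symm
    rw [dist_comm] at h2
    linarith
  obtain ⟨e', he'⟩ := hZc.exists_eq_range ⟨x0, hx0Z⟩
  set e : ℕ → En n := fun i => Nat.casesOn i x0 e' with he
  have he0 : e 0 = x0 := rfl
  have heZ : ∀ i, e i ∈ Z := by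
    intro i
    cases i with
    | zero => exact hx0Z
    | succ i => rw [he']; exact ⟨i, rfl⟩
  have hp : ∀ y : En n, ∃ i, y ∈ ball (e i) (d (e i) / 8) ∨ y ∉ U := by
    intro y
    by_cases hy : y ∈ U
    · obtain ⟨z, hz, hyz⟩ := hcov y hy
      rw [he'] at hz
      obtain ⟨i, rfl⟩ := hz
      exact ⟨i + 1, Or.inl hyz⟩
    · exact ⟨0, Or.inr hy⟩
  set idx : En n → ℕ := fun y => Nat.find (hp y) with hidx
  have hidxm : Measurable idx := measurable_find hp
    (fun k => (measurableSet_ball).union hUo.measurableSet.compl)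
  have hidx1 : ∀ y ∈ U, dist y (e (idx y)) < d (e (idx y)) / 8 := fun y hy =>
    (Nat.find_spec (hp y)).resolve_right (fun h => h hy)
  have hidx2 : ∀ y ∈ U, e (idx y) ≠ x0 → d x0 / 8 ≤ dist y x0 := by
    intro y hy hne
    by_contra hlt
    push Not at hlt
    have : idx y = 0 := (Nat.find_eq_zero (hp y)).2 (Or.inl hlt)
    exact hne (by rw [this, he0])
  set γ : En n → ℝ → En n := fun y => cc y (e (idx y)) (g (e (idx y))) with hγ
  have hseg : ∀ y ∈ U, ∀ w ∈ segment ℝ y (e (idx y)), 7 / 8 * d (e (idx y)) ≤ d w := by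
    intro y hy w hw
    have : w ∈ ball (e (idx y)) (d (e (idx y)) / 8) :=
      (convex_ball _ _).segment_subset (hidx1 y hy)
        (mem_ball_self (by linarith [hdZ _ (heZ (idx y))])) hw
    rw [mem_ball, dist_comm] at this
    linarith [hL (e (idx y)) w]
  have hvar : ∀ y, eVariationOn (γ y) (Icc 0 1) ≤
      edist y (e (idx y)) + eVariationOn (g (e (idx y))) (Icc 0 1) := fun y =>
    cc_var _ _ _ (g0 _ (heZ _))
  refine ⟨γ, ?_, ?_, ⟨100 + 4 * (N + 1), by positivity, ?_, ?_⟩, 1, one_pos, ?_⟩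
  · intro y hy
    refine ⟨(cc_cont _ _ _ (gc _ (heZ _)) (g0 _ (heZ _))).continuousOn, ?_, ?_, cc_zero _ _ _,
      (cc_one _ _ _).trans (g1 _ (heZ _))⟩
    · refine cc_mem _ _ _ (fun w => w ∈ U) (fun w hw => (hd w).2 ?_) (gU _ (heZ _))
      linarith [hseg y hy w hw, hdZ _ (heZ (idx y))]
    · refine (hvar y).trans_lt (ENNReal.add_lt_top.2 ⟨edist_lt_top _ _, gfin _ (heZ _)⟩)
  · have h1 : Measurable (fun q : ℕ × (ℝ × En n) => cc q.2.2 (e q.1) (g (e q.1)) q.2.1) :=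
      measurable_from_prod_countable_right fun i =>
        (cc_joint (e i) (g (e i)) (gc _ (heZ i)) (g0 _ (heZ i))).measurable
    exact h1.comp ((hidxm.comp measurable_snd).prodMk measurable_id)
  · intro x hx y hy r hr
    refine (cc_ball _ _ _ (g0 _ (heZ (idx y))) x r).trans ?_
    refine (add_le_add le_rfl (gb _ (heZ (idx y)) x hx r hr)).trans ?_
    rcases le_total 0 r with h | h
    · rw [← ENNReal.ofReal_natCast, ← ENNReal.ofReal_mul (by positivity),
        ← ENNReal.ofReal_add (by positivity) (by positivity)]
      apply ENNReal.ofReal_le_ofReal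
      nlinarith
    · rw [ENNReal.ofReal_of_nonpos (by linarith)]; simp
  · intro y hy
    set C : ℝ := 100 + 4 * (N + 1) with hC
    have hC100 : 100 ≤ C := by rw [hC]; have : (0:ℝ) ≤ N := Nat.cast_nonneg N; linarith
    have hC0 : ENNReal.ofReal C ≠ 0 := by simp; linarith
    rw [mul_comm, ← ENNReal.div_le_iff_le_mul (Or.inl hC0) (Or.inl ENNReal.ofReal_ne_top)]
    unfold geoDist
    refine le_iInf fun σ => le_iInf fun h1 => le_iInf fun h2 => le_iInf fun h3 => le_iInf fun h4 => ?_
    rw [ENNReal.div_le_iff_le_mul (Or.inl hC0) (Or.inl ENNReal.ofReal_ne_top)]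
    have hdist : edist y x0 ≤ eVariationOn σ (Icc 0 1) := by
      rw [← h3, ← h4]
      exact eVariationOn.edist_le _ (left_mem_Icc.2 zero_le_one) (right_mem_Icc.2 zero_le_one)
    set V := eVariationOn σ (Icc 0 1) with hV
    refine (hvar y).trans ?_
    have hfinal : 100 * V ≤ V * ENNReal.ofReal C := by
      rw [mul_comm]
      refine mul_le_mul' le_rfl ?_
      rw [show (100 : ℝ≥0∞) = ENNReal.ofReal 100 by norm_num]
      exact ENNReal.ofReal_le_ofReal hC100
    refine le_trans ?_ hfinal
    by_cases hcase : e (idx y) = x0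
    · rw [gx0 _ (heZ _) hcase, add_zero, hcase]
      refine hdist.trans ?_
      calc V = 1 * V := (one_mul _).symm
        _ ≤ 100 * V := by gcongr; norm_num
    · have hfar := hidx2 y hy hcase
      have hzy : dist y (e (idx y)) ≤ 9 * dist y x0 := by
        have a1 := hL (e (idx y)) y
        have a2 := hL y x0
        rw [dist_comm] at a1
        linarith [hidx1 y hy]
      have b1 : edist y (e (idx y)) ≤ 9 * V := by
        refine le_trans ?_ (mul_le_mul' le_rfl hdist)
        rw [edist_dist, edist_dist, show (9 : ℝ≥0∞) = ENNReal.ofReal 9 by norm_num,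
          ← ENNReal.ofReal_mul (by norm_num)]
        exact ENNReal.ofReal_le_ofReal hzy
      have b2 : ENNReal.ofReal (3 * d x0) ≤ 24 * V := by
        refine le_trans ?_ (mul_le_mul' le_rfl hdist)
        rw [edist_dist, show (24 : ℝ≥0∞) = ENNReal.ofReal 24 by norm_num,
          ← ENNReal.ofReal_mul (by norm_num)]
        exact ENNReal.ofReal_le_ofReal (by linarith)
      have b3 := gσ _ (heZ (idx y)) σ h1 h2 h4 (by rw [h3]; exact hidx1 y hy)
      calc edist y (e (idx y)) + eVariationOn (g (e (idx y))) (Icc 0 1)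
          ≤ 9 * V + 2 * (20 * V + 24 * V) := by
            refine add_le_add b1 (b3.trans ?_)
            gcongr
        _ = 97 * V := by ring
        _ ≤ 100 * V := by gcongr; norm_num
  · intro ε hε _
    have hfin : {z ∈ Z | ε / 2 < d z}.Finite := by
      refine sep_finite _ (hUb.subset fun z hz => hZU hz.1) (ε / 32) (by positivity) ?_
      intro v hv w hw hne
      linarith [hsep v hv.1 w hw.1 hne, hv.2]
    have hK : IsCompact (⋃ z ∈ {z ∈ Z | ε / 2 < d z}, g z '' Icc 0 1) :=
      hfin.isCompact_biUnion fun z hz => isCompact_Icc.image (gc z hz.1)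
    have hKδ : ∃ δ > 0, ∀ w ∈ (⋃ z ∈ {z ∈ Z | ε / 2 < d z}, g z '' Icc 0 1), δ ≤ d w := by
      rcases (⋃ z ∈ {z ∈ Z | ε / 2 < d z}, g z '' Icc 0 1).eq_empty_or_nonempty with h | h
      · exact ⟨1, one_pos, by rw [h]; simp⟩
      · obtain ⟨w, hw, hmin⟩ := hK.exists_isMinOn h hdc.continuousOn
        refine ⟨d w, ?_, fun v hv => hmin hv⟩
        simp only [mem_iUnion] at hw
        obtain ⟨z, hz, t, ht, rfl⟩ := hw
        exact hd1 _ (gU z hz.1 t ht)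
    obtain ⟨δ, hδ, hKδ⟩ := hKδ
    refine ⟨min (δ / 2) (ε / 4), by positivity, ?_⟩
    intro y hy hεy
    have hz : ε / 2 < d (e (idx y)) := by
      linarith [hL y (e (idx y)), hidx1 y hy]
    refine cc_mem _ _ _ (fun w => min (δ / 2) (ε / 4) < d w) ?_ ?_
    · intro w hw
      have := hseg y hy w hw
      have h2 := min_le_right (δ / 2) (ε / 4)
      linarith
    · intro t ht
      have h2 := min_le_left (δ / 2) (ε / 4)
      have := hKδ (g (e (idx y)) t) (by
        simp only [mem_iUnion]
        exact ⟨_, ⟨heZ _, hz⟩, t, ht, rfl⟩)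
      linarith

lemma hat_facts {n : ℕ} (hn : 1 ≤ n) (Ω Ot : Set (En n))
    (hΩopen : IsOpen Ω) (hΩconn : IsConnected Ω) (hΩbdd : Bornology.IsBounded Ω)
    (hcov : Ω ⊆ Ot) (hcovnull : volume (Ot \ Ω) = 0) :
    IsOpen (hatSet Ot) ∧ IsConnected (hatSet Ot) ∧ Bornology.IsBounded (hatSet Ot) ∧
      Ω ⊆ hatSet Ot ∧ (hatSet Ot)ᶜ.Nonempty := by
  have hne : Otᶜ.Nonempty := by
    rw [nonempty_compl]
    rintro rfl
    haveI : Nonempty (Fin n) := ⟨⟨0, hn⟩⟩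
    have h1 : volume (univ : Set (En n)) ≤ volume (univ \ Ω) + volume Ω := by
      rw [← Set.diff_union_of_subset (subset_univ Ω)]
      refine (measure_union_le _ _).trans ?_
      simp
    rw [hcovnull, zero_add, measure_univ_of_isAddLeftInvariant] at h1
    exact absurd (hΩbdd.measure_lt_top (μ := volume)) (not_lt.2 h1)
  have hopen : IsOpen (hatSet Ot) := by
    have : hatSet Ot = {x | 0 < infDist x Otᶜ} := by
      ext x
      refine ⟨fun h => h.2, fun h => ⟨?_, h⟩⟩
      by_contra hx
      have : infDist x Otᶜ = 0 := infDist_zero_of_mem hx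
      exact absurd h (by rw [mem_setOf_eq, this]; exact lt_irrefl _)
    rw [this]
    exact isOpen_lt continuous_const (continuous_infDist_pt _)
  have hsub : Ω ⊆ hatSet Ot := by
    intro x hx
    refine ⟨hcov hx, ?_⟩
    obtain ⟨r, hr, hb⟩ := Metric.isOpen_iff.1 hΩopen x hx
    refine hr.trans_le ((le_infDist hne).2 fun y hy => ?_)
    by_contra hlt
    push Not at hlt
    exact hy (hcov (hb (by rw [mem_ball, dist_comm]; exact hlt)))
  have hcl : hatSet Ot ⊆ closure Ω := by
    intro x hx
    by_contra hxc
    have ho : IsOpen (hatSet Ot \ closure Ω) := hopen.sdiff isClosed_closure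
    refine absurd (ho.measure_pos volume ⟨x, hx, hxc⟩) (not_lt.2 ?_)
    rw [← hcovnull]
    exact measure_mono fun y hy => ⟨hy.1.1, fun h => hy.2 (subset_closure h)⟩
  exact ⟨hopen, hΩconn.subset_closure hsub hcl, hΩbdd.closure.subset hcl, hsub,
    hne.mono (compl_subset_compl.2 fun x hx => hx.1)⟩

end PathSys

/-- (Path system, Lemma 2.1.) For a bounded domain `Ω ⊆ ℝⁿ`, its
associated cover `Ω̂`, and `x0 ∈ Ω`, there is a family of rectifiable curves
`γ_y : [0,1] → Ω̂` with: (a) `γ(0,y) = y`, `γ(1,y) = x0`; (b) `(t,y) ↦ γ(t,y)`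
measurable; (c) for a constant `C > 0`, `l(γ_y ∩ B(x,r)) ≤ C r` whenever `x, y ∈ Ω`
and `r ≤ d̂(x)/2`, and `l(γ_y) ≤ C d_Ω̂(y)`; (d) for all small `ε > 0` there is
`δ > 0` with `γ_y ⊆ Ω̂_δ` for all `y ∈ Ω̂_ε`. -/
theorem stmt_4 (n : ℕ) (hn : 1 ≤ n) (Ω Ot : Set (En n))
    (hΩopen : IsOpen Ω) (hΩconn : IsConnected Ω) (hΩbdd : Bornology.IsBounded Ω)
    (hcov : Ω ⊆ Ot) (hcovnull : volume (Ot \ Ω) = 0)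
    (x0 : En n) (hx0 : x0 ∈ Ω) :
    ∃ γ : En n → ℝ → En n,
      (∀ y ∈ hatSet Ot,
        ContinuousOn (γ y) (Set.Icc 0 1) ∧
        (∀ t ∈ Set.Icc (0:ℝ) 1, γ y t ∈ hatSet Ot) ∧
        eVariationOn (γ y) (Set.Icc 0 1) < ⊤ ∧
        γ y 0 = y ∧ γ y 1 = x0) ∧
      Measurable (fun q : ℝ × En n => γ q.2 q.1) ∧
      (∃ C : ℝ, 0 < C ∧
        (∀ x ∈ Ω, ∀ y ∈ Ω, ∀ r : ℝ, r ≤ Metric.infDist x (hatSet Ot)ᶜ / 2 →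
          eVariationOn (γ y) {t ∈ Set.Icc (0:ℝ) 1 | γ y t ∈ Metric.ball x r} ≤
            ENNReal.ofReal (C * r)) ∧
        (∀ y ∈ hatSet Ot,
          eVariationOn (γ y) (Set.Icc 0 1) ≤
            ENNReal.ofReal C * geoDist (hatSet Ot) x0 y)) ∧
      (∃ ε0 : ℝ, 0 < ε0 ∧ ∀ ε : ℝ, 0 < ε → ε < ε0 → ∃ δ : ℝ, 0 < δ ∧
        ∀ y ∈ hatSet Ot, ε < Metric.infDist y (hatSet Ot)ᶜ →
          ∀ t ∈ Set.Icc (0:ℝ) 1, δ < Metric.infDist (γ y t) (hatSet Ot)ᶜ) := by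
  obtain ⟨hUo, hUc, hUb, hsub, hne⟩ :=
    PathSys.hat_facts hn Ω Ot hΩopen hΩconn hΩbdd hcov hcovnull
  have hd : ∀ x, x ∈ hatSet Ot ↔ 0 < Metric.infDist x (hatSet Ot)ᶜ := by
    intro x
    rw [← hUo.isClosed_compl.notMem_iff_infDist_pos hne, Set.notMem_compl_iff]
  obtain ⟨γ, h1, h2, ⟨C, hC, h3, h4⟩, h5⟩ := PathSys.main (hatSet Ot)
    (fun x => Metric.infDist x (hatSet Ot)ᶜ) hUo hUc hUb hd
    (fun x y => Metric.infDist_le_infDist_add_dist) (Metric.continuous_infDist_pt _) x0 (hsub hx0)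
  exact ⟨γ, h1, h2, ⟨C, hC, fun x hx y hy => h3 x (hsub hx) y (hsub hy), h4⟩, h5⟩
end
end
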